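/- For every δ > 0 there exist a real y = y(δ) > 0 and x₀ such that for all x ≥ x₀: the number of primes p ≤ x that are y-rough and satisfy d/φ(d) ≤ 5 for every divisor d of p−1 is at least (1−δ) times the number of y-rough primes p ≤ x. -/

import Mathlib

/-!
# Almost all rough primes `p` have `d / φ(d) ≤ 5` for every `d ∣ p - 1`

Fix a large integer `Y`. Since `d / φ(d) = ∏_{q ∣ d} (1 - 1/q)⁻¹` and the factor of `q = 2` is `2`,
a prime `p` is harmless as soon as `∑ 1/q ≤ 1/2` over the odd primes `q ∣ p - 1`
(`div_totient_le_five`). The remaining `Y`-rough primes are counted by Markov's inequality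
(`card_le_sum`): up to a factor `2` there are at most `∑_{q ≥ Y} π(X; q, 1) / q` of them.

*Upper bound for `π(X; q, 1)`.* With `n = X / q`, the primes `p ≡ 1 (mod q)` in `(n, X]` all divide
`A = ∏_{k ≤ n} (q k + 1)`. The part of `n!` prime to `q` also divides `A`, and it is coprime to
these primes, so their product is at most `q ^ (2 n) (n + 1)` (`pow_card_primes_le`). Together with
Chebyshev's bound for `π(n)` this gives `π(X; q, 1) ≪ (X / q) (1 + log q) / log X` for `q ^ 2 ≤ X`
(`card_primes_mod_one_le`). This loses a factor `log q` against the Brun–Titchmarsh inequality,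
which is affordable: the exceptional primes number `O(Y ^ (-17/20) X / log X)` (`bad_upper`).

*Lower bound for the number of rough primes.* Let `Q` be the product of the odd primes below `Y`.
A prime `p` with `p` and `p - 1` both invertible mod `Q` is `Y`-rough, and such residues form a
proportion `κ = ∏_{2 < q < Y} (q - 2) / (q - 1)` of all units mod `Q`. The prime number theorem in
progressions would give about `κ X / log X` rough primes; a lower bound `≫ κ² X / log X` with an
absolute implied constant suffices (`rough_lower`). It is obtained from the continuity of
`L'/L` on `re s = 1` by a Tauberian argument with a Fejér kernel (`mangoldtOn_lower`).

*Comparison.* The only primes in `[6k, 6k + 6)` are among `6k + 1` and `6k + 5`, from which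
`κ ^ 5 k ^ 2` is nondecreasing in `k` for `Y = 6k`, so `κ² ≫ Y ^ (-4/5)` (`kap_sq_lower`). As
`17/20 > 4/5`, the exceptional primes are a small proportion of the rough ones once `Y` is large.
-/

/-- A prime `p` is `y`-rough if every prime factor of `p - 1` other than `2`
is at least `y`. -/
def IsRough (y : ℝ) (p : ℕ) : Prop :=
  ∀ q : ℕ, q.Prime → q ∣ p - 1 → q ≠ 2 → y ≤ (q : ℝ)

section

open Real Set Filter Topology MeasureTheory Finset

/-! ### The Fejér kernel -/

/-- The Fejér kernel: the Fourier transform, at frequency `u`, of the triangle function supported on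
`[-T, T]`. -/
noncomputable def fejer (T u : ℝ) : ℝ := ∫ t in (-T)..T, (1 - |t| / T) * cos (t * u)

lemma continuous_tri (T : ℝ) : Continuous fun t : ℝ => 1 - |t| / T := by fun_prop

lemma fejer_eq_half {T : ℝ} (u : ℝ) :
    fejer T u = 2 * ∫ t in (0:ℝ)..T, (1 - |t| / T) * cos (t * u) := by
  have hc : Continuous fun t : ℝ => (1 - |t| / T) * cos (t * u) := by fun_prop
  unfold fejer
  rw [← intervalIntegral.integral_add_adjacent_intervals (b := 0)
    (hc.intervalIntegrable _ _) (hc.intervalIntegrable _ _)]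
  have := intervalIntegral.integral_comp_neg (a := 0) (b := T)
    (fun t : ℝ => (1 - |t| / T) * cos (t * u))
  simp only [abs_neg, neg_mul, cos_neg, neg_zero] at this
  rw [← this]; ring

lemma fejer_eq_half' {T : ℝ} (hT : 0 < T) (u : ℝ) :
    fejer T u = 2 * ∫ t in (0:ℝ)..T, (1 - t / T) * cos (t * u) := by
  rw [fejer_eq_half]
  congr 1
  apply intervalIntegral.integral_congr
  intro t ht
  rw [uIcc_of_le hT.le] at ht
  simp only [abs_of_nonneg ht.1]

lemma fejer_formula {T u : ℝ} (hT : 0 < T) (hu : u ≠ 0) :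
    fejer T u = 2 * (1 - cos (T * u)) / (T * u ^ 2) := by
  rw [fejer_eq_half' hT]
  have hd : ∀ t ∈ uIcc 0 T, HasDerivAt
      (fun t : ℝ => (1 - t / T) * sin (t * u) / u - cos (t * u) / (T * u ^ 2))
      ((1 - t / T) * cos (t * u)) t := by
    intro t _
    have h1 : HasDerivAt (fun t : ℝ => 1 - t / T) (-(1 / T)) t :=
      ((hasDerivAt_id t).div_const T).const_sub 1
    have h2 : HasDerivAt (fun t : ℝ => t * u) (1 * u) t := (hasDerivAt_id t).mul_const u
    have := ((h1.mul h2.sin).div_const u).sub (h2.cos.div_const (T * u ^ 2))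
    convert! this using 1
    field_simp
    ring
  rw [intervalIntegral.integral_eq_sub_of_hasDerivAt hd
    ((by fun_prop : Continuous fun t : ℝ => (1 - t / T) * cos (t * u)).intervalIntegrable _ _)]
  simp [hT.ne']
  field_simp
  ring

lemma fejer_nonneg {T : ℝ} (hT : 0 < T) (u : ℝ) : 0 ≤ fejer T u := by
  rcases eq_or_ne u 0 with rfl | hu
  · rw [fejer_eq_half' hT]
    refine mul_nonneg zero_le_two (intervalIntegral.integral_nonneg hT.le fun t ht => ?_)
    have : t / T ≤ 1 := (div_le_one hT).2 ht.2
    simp; linarith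
  · rw [fejer_formula hT hu]
    have := cos_le_one (T * u)
    apply div_nonneg <;> [linarith; positivity]

lemma fejer_le_inv_sq {T u : ℝ} (hT : 0 < T) (hu : u ≠ 0) : fejer T u ≤ 4 / (T * u ^ 2) := by
  rw [fejer_formula hT hu]
  have := neg_one_le_cos (T * u)
  gcongr
  linarith

lemma integral_tri {T : ℝ} (hT : 0 < T) : ∫ t in (0:ℝ)..T, (1 - t / T) = T / 2 := by
  rw [intervalIntegral.integral_sub (by simp) (by apply Continuous.intervalIntegrable; fun_prop)]
  simp
  field_simp
  norm_num

lemma fejer_le {T : ℝ} (hT : 0 < T) (u : ℝ) : fejer T u ≤ T := by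
  have : ∫ t in (0:ℝ)..T, (1 - t / T) * cos (t * u) ≤ ∫ t in (0:ℝ)..T, (1 - t / T) := by
    apply intervalIntegral.integral_mono_on hT.le
    · apply Continuous.intervalIntegrable; fun_prop
    · apply Continuous.intervalIntegrable; fun_prop
    intro t ht
    have h1 : t / T ≤ 1 := (div_le_one hT).2 ht.2
    have := cos_le_one (t * u)
    nlinarith
  rw [integral_tri hT] at this
  rw [fejer_eq_half' hT]; linarith

lemma le_fejer {T u : ℝ} (hT : 0 < T) (hu : |u| ≤ 1 / T) : T / 2 ≤ fejer T u := by
  have : ∫ t in (0:ℝ)..T, (1 - t / T) * (1 / 2) ≤ ∫ t in (0:ℝ)..T, (1 - t / T) * cos (t * u) := by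
    apply intervalIntegral.integral_mono_on hT.le
    · apply Continuous.intervalIntegrable; fun_prop
    · apply Continuous.intervalIntegrable; fun_prop
    intro t ht
    have h1 : t / T ≤ 1 := (div_le_one hT).2 ht.2
    have h2 : |t * u| ≤ 1 := by
      rw [abs_mul, abs_of_nonneg ht.1]
      calc t * |u| ≤ T * (1 / T) := by gcongr; exact ht.2
        _ = 1 := by field_simp
    have h3 := one_sub_sq_div_two_le_cos (x := t * u)
    have h4 : (t * u) ^ 2 ≤ 1 := by rw [← sq_abs]; nlinarith [abs_nonneg (t * u)]
    have : 1 / 2 ≤ cos (t * u) := by linarith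
    apply mul_le_mul_of_nonneg_left this; linarith
  rw [intervalIntegral.integral_mul_const, integral_tri hT] at this
  rw [fejer_eq_half' hT]; linarith

lemma fejer_complex {T : ℝ} (u : ℝ) :
    ∫ t in (-T)..T, ((1 - |t| / T : ℝ) : ℂ) * Complex.exp (((t * u : ℝ) : ℂ) * Complex.I)
      = (fejer T u : ℂ) := by
  have hs : ∫ t in (-T)..T, (1 - |t| / T) * sin (t * u) = 0 := by
    have := intervalIntegral.integral_comp_neg (a := -T) (b := T)
      (fun t : ℝ => (1 - |t| / T) * sin (t * u))
    simp only [abs_neg, neg_mul, sin_neg, neg_neg, mul_neg, intervalIntegral.integral_neg] at this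
    linarith
  have e : ∀ t : ℝ, ((1 - |t| / T : ℝ) : ℂ) * Complex.exp (((t * u : ℝ) : ℂ) * Complex.I)
      = (((1 - |t| / T) * cos (t * u) : ℝ) : ℂ)
        + (((1 - |t| / T) * sin (t * u) : ℝ) : ℂ) * Complex.I := by
    intro t
    rw [Complex.exp_mul_I]; push_cast; ring
  simp_rw [e]
  rw [intervalIntegral.integral_add, intervalIntegral.integral_mul_const,
    intervalIntegral.integral_ofReal, intervalIntegral.integral_ofReal, hs]
  · simp [fejer]
  · apply Continuous.intervalIntegrable; fun_prop
  · apply Continuous.intervalIntegrable; fun_prop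

/-- Weighting the terms of a Dirichlet series on the real axis by the Fejér kernel amounts to
integrating the series along a vertical segment against the triangle function. -/
lemma fejer_smoothed {a : ℕ → ℂ} {T σ L : ℝ} (ha : LSeriesSummable a σ) :
    HasSum (fun n : ℕ => LSeries.term a σ n * (fejer T (L - log n) : ℂ))
      (∫ t in (-T)..T, ((1 - |t| / T : ℝ) : ℂ) * Complex.exp (((t * L : ℝ) : ℂ) * Complex.I)
        * LSeries a (σ + t * Complex.I)) := by
  have hterm : ∀ (n : ℕ) (t : ℝ), LSeries.term a (σ + t * Complex.I) n
      = LSeries.term a σ n * Complex.exp (((t * (-log n) : ℝ) : ℂ) * Complex.I) := by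
    intro n t
    rcases eq_or_ne n 0 with rfl | hn
    · simp
    · rw [LSeries.term_of_ne_zero hn, LSeries.term_of_ne_zero hn, 
        Complex.cpow_add _ _ (by exact_mod_cast hn), div_mul_eq_div_div, div_eq_mul_inv,
        ← Complex.cpow_neg, Complex.cpow_def_of_ne_zero (by exact_mod_cast hn) (-(t * Complex.I)), ← Complex.natCast_log]
      push_cast
      ring_nf
  let F : ℕ → C(ℝ, ℂ) := fun n =>
    ⟨fun t => ((1 - |t| / T : ℝ) : ℂ) * Complex.exp (((t * L : ℝ) : ℂ) * Complex.I) *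
      (LSeries.term a σ n * Complex.exp (((t * (-log n) : ℝ) : ℂ) * Complex.I)), by fun_prop⟩
  have hF : ∀ n, ∫ t in (-T)..T, F n t = LSeries.term a σ n * (fejer T (L - log n) : ℂ) := by
    intro n
    rw [← fejer_complex, ← intervalIntegral.integral_const_mul]
    congr 1; ext t
    change ((1 - |t| / T : ℝ) : ℂ) * Complex.exp (((t * L : ℝ) : ℂ) * Complex.I) *
      (LSeries.term a σ n * Complex.exp (((t * (-log n) : ℝ) : ℂ) * Complex.I)) = _
    have : (((t * (L - log n) : ℝ) : ℂ) * Complex.I) = (((t * L : ℝ) : ℂ) * Complex.I)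
      + (((t * (-log n) : ℝ) : ℂ) * Complex.I) := by push_cast; ring
    rw [this, Complex.exp_add]; ring
  have hsum : Summable fun n => ‖(F n).restrict
      (⟨uIcc (-T) T, isCompact_uIcc⟩ : TopologicalSpace.Compacts ℝ)‖ := by
    obtain ⟨B, hB⟩ := (isCompact_uIcc (a := -T) (b := T)).exists_bound_of_continuousOn
      (continuous_tri T).continuousOn
    have hB0 : 0 ≤ B := (norm_nonneg _).trans (hB (-T) left_mem_uIcc)
    refine Summable.of_nonneg_of_le (fun _ => norm_nonneg _) (fun n => ?_)
      ((Summable.norm ha).mul_left B)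
    rw [ContinuousMap.norm_le _ (by positivity)]
    rintro ⟨t, ht⟩
    change ‖((1 - |t| / T : ℝ) : ℂ) * Complex.exp (((t * L : ℝ) : ℂ) * Complex.I) *
      (LSeries.term a σ n * Complex.exp (((t * (-log n) : ℝ) : ℂ) * Complex.I))‖ ≤ _
    rw [norm_mul, norm_mul, norm_mul, Complex.norm_exp_ofReal_mul_I, Complex.norm_exp_ofReal_mul_I,
      Complex.norm_real]
    simp only [mul_one]
    exact mul_le_mul_of_nonneg_right (hB t ht) (norm_nonneg _)
  have := intervalIntegral.hasSum_intervalIntegral_of_summable_norm (a := -T) (b := T) hsum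
  simp_rw [hF] at this
  convert! this using 3 with t
  rw [LSeries, ← tsum_mul_left]
  simp_rw [hterm]
  rfl

/-! ### A Tauberian estimate -/

/-- If a Dirichlet series extends continuously to `re s = 1`, its Fejér-smoothed sums around `e ^ L`
are eventually small: let `σ → 1⁺` by dominated convergence, and then `L → ∞` by the
Riemann–Lebesgue lemma. -/
lemma tauberian_smoothed {a : ℕ → ℂ} {G : ℂ → ℂ} (ha : ∀ σ : ℝ, 1 < σ → LSeriesSummable a σ)
    (hG : ContinuousOn G {s | 1 ≤ s.re}) (hGa : Set.EqOn G (LSeries a) {s | 1 < s.re})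
    {T : ℝ} (hT : 0 < T) {ε : ℝ} (hε : 0 < ε) :
    ∃ L₀ : ℝ, ∀ L ≥ L₀, ∀ᶠ σ : ℝ in 𝓝[>] 1,
      ‖∑' n, LSeries.term a σ n * (fejer T (L - log n) : ℂ)‖ < ε := by
  set Φ : ℝ → ℝ → ℂ := fun σ L => ∫ t in (-T)..T, ((1 - |t| / T : ℝ) : ℂ) *
    Complex.exp (((t * L : ℝ) : ℂ) * Complex.I) * G (σ + t * Complex.I) with hΦ
  have hline : ∀ σ : ℝ, 1 ≤ σ → Continuous fun t : ℝ => G (σ + t * Complex.I) := by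
    intro σ hσ
    refine hG.comp_continuous (by fun_prop) fun t => ?_
    simpa using hσ
  have h1 : ∀ L, Tendsto (fun σ => Φ σ L) (𝓝[>] 1) (𝓝 (Φ 1 L)) := by
    intro L
    have hK : IsCompact ((fun p : ℝ × ℝ => (p.1 + p.2 * Complex.I : ℂ)) ''
        (Set.Icc 1 2 ×ˢ Set.Icc (-T) T)) :=
      (isCompact_Icc.prod isCompact_Icc).image (by fun_prop)
    obtain ⟨B, hB⟩ := hK.exists_bound_of_continuousOn (f := G) (hG.mono (by
      rintro _ ⟨⟨p, q⟩, ⟨hp, hq⟩, rfl⟩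
      simpa using hp.1))
    have h12 : ∀ᶠ σ : ℝ in 𝓝[>] 1, σ ∈ Set.Ioc (1:ℝ) 2 :=
      Ioc_mem_nhdsGT (by norm_num)
    refine intervalIntegral.tendsto_integral_filter_of_dominated_convergence (fun _ => B) ?_ ?_
      (by simp) ?_
    · filter_upwards [h12] with σ hσ
      have := hline σ hσ.1.le
      exact Continuous.aestronglyMeasurable (Continuous.mul (by fun_prop) this)
    · filter_upwards [h12] with σ hσ
      refine ae_of_all _ fun t ht => ?_
      rw [uIoc_of_le (by linarith)] at ht
      rw [norm_mul, norm_mul, Complex.norm_exp_ofReal_mul_I, Complex.norm_real, mul_one]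
      have hb := hB _ ⟨(σ, t), ⟨⟨hσ.1.le, hσ.2⟩, ⟨ht.1.le, ht.2⟩⟩, rfl⟩
      have h2 : ‖1 - |t| / T‖ ≤ 1 := by
        have h3 : |t| / T ≤ 1 := (div_le_one hT).2 (abs_le.2 ⟨ht.1.le, ht.2⟩)
        have h4 : 0 ≤ |t| / T := by positivity
        rw [Real.norm_eq_abs, abs_le]; constructor <;> linarith
      calc ‖1 - |t| / T‖ * ‖G (σ + t * Complex.I)‖ ≤ 1 * B :=
            mul_le_mul h2 hb (norm_nonneg _) zero_le_one
        _ = B := one_mul _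
    · refine ae_of_all _ fun t _ => ?_
      refine Tendsto.const_mul _ ?_
      have hc : ContinuousWithinAt G {s | 1 ≤ s.re} ((1:ℝ) + t * Complex.I) :=
        hG _ (by simp)
      refine hc.tendsto.comp (tendsto_nhdsWithin_iff.2 ⟨?_, ?_⟩)
      · exact ((by fun_prop : Continuous fun σ : ℝ => (σ + t * Complex.I : ℂ)).tendsto 1).mono_left
          nhdsWithin_le_nhds
      · filter_upwards [h12] with σ hσ
        simpa using hσ.1.le
  have h2 : Tendsto (fun L => Φ 1 L) atTop (𝓝 0) := by
    have hRL := Real.tendsto_integral_exp_smul_cocompact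
      ((Set.Ioc (-T) T).indicator fun t : ℝ => ((1 - |t| / T : ℝ) : ℂ) * G ((1:ℝ) + t * Complex.I))
    have hw : Tendsto (fun L : ℝ => -(L / (2 * π))) atTop (cocompact ℝ) := by
      refine Tendsto.mono_right ?_ atBot_le_cocompact
      exact tendsto_neg_atTop_atBot.comp (tendsto_id.atTop_div_const (by positivity))
    refine (hRL.comp hw).congr fun L => ?_
    simp only [hΦ, Function.comp]
    rw [intervalIntegral.integral_of_le (by linarith), ← integral_indicator measurableSet_Ioc]
    congr 1; ext t
    by_cases ht : t ∈ Set.Ioc (-T) T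
    · rw [indicator_of_mem ht, indicator_of_mem ht, Circle.smul_def, smul_eq_mul,
        Real.fourierChar_apply]
      have : ((2 * π * -(t * -(L / (2 * π))) : ℝ) : ℂ) = ((t * L : ℝ) : ℂ) := by
        congr 1; field_simp
      rw [this]; ring
    · rw [indicator_of_notMem ht, indicator_of_notMem ht, smul_zero]
  obtain ⟨L₀, hL₀⟩ := eventually_atTop.1 ((tendsto_zero_iff_norm_tendsto_zero.1 h2).eventually
    (gt_mem_nhds hε))
  refine ⟨L₀, fun L hL => ?_⟩
  filter_upwards [(h1 L).norm.eventually (gt_mem_nhds (hL₀ L hL)), self_mem_nhdsWithin]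
    with σ hσ hσ1
  rw [(fejer_smoothed (ha σ hσ1)).tsum_eq]
  convert! hσ using 2
  simp only [hΦ]
  congr 1; ext t
  rw [hGa (by simpa using hσ1)]

/-! ### The von Mangoldt function on a set of residue classes -/

/-- `ζ(s) - 1 / (s - 1)`, extended continuously to `s = 1` by Euler's constant. -/
noncomputable def zetaReg : ℂ → ℂ :=
  Function.update (fun s => riemannZeta s - 1 / (s - 1)) 1 (eulerMascheroniConstant : ℂ)

lemma continuous_zetaReg : Continuous zetaReg := by
  rw [continuous_iff_continuousAt]
  intro s
  rcases eq_or_ne s 1 with rfl | hs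
  · rw [zetaReg, continuousAt_update_same]
    exact tendsto_riemannZeta_sub_one_div
  · rw [zetaReg, continuousAt_update_of_ne hs]
    exact (differentiableAt_riemannZeta hs).continuousAt.sub
      (continuousAt_const.div (by fun_prop) (sub_ne_zero.2 hs))

lemma zetaReg_eq {s : ℂ} (hs : 1 < s.re) : zetaReg s = LSeries 1 s - 1 / (s - 1) := by
  have : s ≠ 1 := by rintro rfl; simp at hs
  rw [zetaReg, Function.update_of_ne this, LSeries_one_eq_riemannZeta hs]

open ArithmeticFunction in
/-- The von Mangoldt function restricted to the integers whose residue mod `Q` lies in `S`. -/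
noncomputable def mangoldtOn {Q : ℕ} (S : Finset (ZMod Q)) (n : ℕ) : ℝ :=
  open Classical in if (n : ZMod Q) ∈ S then vonMangoldt n else 0

lemma mangoldtOn_eq_sum {Q : ℕ} (S : Finset (ZMod Q)) (n : ℕ) :
    mangoldtOn S n = ∑ a ∈ S, ArithmeticFunction.vonMangoldt.residueClass a n := by
  classical
  simp only [mangoldtOn, ArithmeticFunction.vonMangoldt.residueClass, Set.indicator_apply,
    Set.mem_ofPred_eq]
  rw [Finset.sum_ite_eq]

lemma mangoldtOn_nonneg {Q : ℕ} (S : Finset (ZMod Q)) (n : ℕ) : 0 ≤ mangoldtOn S n := by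
  unfold mangoldtOn
  split_ifs <;> simp

lemma mangoldtOn_le {Q : ℕ} (S : Finset (ZMod Q)) (n : ℕ) :
    mangoldtOn S n ≤ ArithmeticFunction.vonMangoldt n := by
  unfold mangoldtOn
  split_ifs <;> simp

open ArithmeticFunction ArithmeticFunction.vonMangoldt in
lemma summable_residueClass {Q : ℕ} (a : ZMod Q) {s : ℂ} (hs : 1 < s.re) :
    LSeriesSummable (fun n => (residueClass a n : ℂ)) s :=
  LSeriesSummable_of_abscissaOfAbsConv_lt_re
    ((abscissaOfAbsConv_residueClass_le_one a).trans_lt (by exact_mod_cast hs))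

open ArithmeticFunction.vonMangoldt in
/-- The Fejér-smoothed sums of `mangoldtOn S` are, up to `ε`, at least `|S| / φ(Q)` times those of the
constant function `1`: the difference of the two Dirichlet series has no pole at `s = 1`. -/
lemma tauberian_mangoldtOn {Q : ℕ} [NeZero Q] (S : Finset (ZMod Q)) (hS : ∀ a ∈ S, IsUnit a)
    {T : ℝ} (hT : 0 < T) {ε : ℝ} (hε : 0 < ε) :
    ∃ L₀ : ℝ, ∀ L ≥ L₀, ∀ᶠ σ : ℝ in 𝓝[>] 1,
      Summable (fun n : ℕ => mangoldtOn S n / (n : ℝ) ^ σ * fejer T (L - log n)) ∧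
      Summable (fun n : ℕ => 1 / (n : ℝ) ^ σ * fejer T (L - log n)) ∧
      (S.card / Q.totient : ℝ) * ∑' n : ℕ, 1 / (n : ℝ) ^ σ * fejer T (L - log n) - ε ≤
        ∑' n : ℕ, mangoldtOn S n / (n : ℝ) ^ σ * fejer T (L - log n) := by
  set κ : ℝ := S.card / Q.totient with hκ
  have hsum1 : ∀ s : ℂ, 1 < s.re → LSeriesSummable (fun n => (mangoldtOn S n : ℂ)) s := by
    intro s hs
    have : (fun n => (mangoldtOn S n : ℂ)) = ∑ a ∈ S, fun n => (residueClass a n : ℂ) := by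
      ext n; simp [mangoldtOn_eq_sum]
    rw [this]
    exact LSeriesSummable.sum fun a _ => summable_residueClass a hs
  have hsum2 : ∀ s : ℂ, 1 < s.re → LSeriesSummable (1 : ℕ → ℂ) s := fun s hs =>
    LSeriesSummable_one_iff.2 hs
  have hsum : ∀ s : ℂ, 1 < s.re →
      LSeriesSummable ((fun n => (mangoldtOn S n : ℂ)) - (κ : ℂ) • (1 : ℕ → ℂ)) s := fun s hs =>
    (hsum1 s hs).sub ((hsum2 s hs).smul _)
  obtain ⟨L₀, hL₀⟩ := tauberian_smoothed
    (a := (fun n => (mangoldtOn S n : ℂ)) - (κ : ℂ) • (1 : ℕ → ℂ))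
    (G := fun s => ∑ a ∈ S, LFunctionResidueClassAux a s - κ * zetaReg s)
    (fun σ hσ => hsum σ (by simpa using hσ))
    (by
      refine ContinuousOn.sub (continuousOn_finsetSum _ fun a _ =>
        continuousOn_LFunctionResidueClassAux a) ?_
      exact (continuous_const.mul continuous_zetaReg).continuousOn)
    (by
      intro s hs
      have hs' : 1 < s.re := hs
      have e1 : LSeries (fun n => (mangoldtOn S n : ℂ)) s
          = ∑ a ∈ S, LSeries (fun n => (residueClass a n : ℂ)) s := by
        rw [← LSeries_sum fun a _ => summable_residueClass a hs']
        congr 1; ext n; simp [mangoldtOn_eq_sum]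
      beta_reduce
      rw [LSeries_sub (hsum1 s hs') ((hsum2 s hs').smul _), LSeries_smul, e1, zetaReg_eq hs',
        Finset.sum_congr rfl fun a ha => eqOn_LFunctionResidueClassAux (hS a ha) hs,
        Finset.sum_sub_distrib]
      simp only [Finset.sum_const, nsmul_eq_mul, hκ]
      push_cast
      ring)
    hT hε
  refine ⟨L₀, fun L hL => ?_⟩
  filter_upwards [hL₀ L hL, self_mem_nhdsWithin] with σ hσ hσ1
  have hσ1' : (1:ℝ) < (σ : ℂ).re := by simpa using hσ1
  have hσ0 : σ ≠ 0 := by have : (1:ℝ) < σ := hσ1; linarith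
  have key : ∀ (b : ℕ → ℝ), LSeriesSummable (fun n => (b n : ℂ)) σ →
      Summable (fun n : ℕ => b n / (n : ℝ) ^ σ * fejer T (L - log n)) := by
    intro b hb
    rw [← Complex.summable_ofReal]
    have := (fejer_smoothed (T := T) (L := L) hb).summable
    convert! this using 2 with n
    rcases eq_or_ne n 0 with rfl | hn
    · simp [Real.zero_rpow hσ0]
    · rw [LSeries.term_of_ne_zero hn]; push_cast
      rw [Complex.ofReal_cpow (by positivity)]; norm_cast
  have s1 := key _ (hsum1 σ hσ1')
  have s2 := key (fun _ => 1) (by simpa using! hsum2 σ hσ1')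
  refine ⟨s1, s2, ?_⟩
  have e : ∑' n, LSeries.term ((fun n => (mangoldtOn S n : ℂ)) - (κ : ℂ) • (1 : ℕ → ℂ)) σ n
      * (fejer T (L - log n) : ℂ) =
      ((∑' n : ℕ, mangoldtOn S n / (n : ℝ) ^ σ * fejer T (L - log n)
        - κ * ∑' n : ℕ, 1 / (n : ℝ) ^ σ * fejer T (L - log n) : ℝ) : ℂ) := by
    rw [← tsum_mul_left, ← s1.tsum_sub (s2.mul_left κ), Complex.ofReal_tsum]
    congr 1; ext n
    rcases eq_or_ne n 0 with rfl | hn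
    · simp [Real.zero_rpow hσ0]
    · rw [LSeries.term_of_ne_zero hn]; push_cast
      rw [Complex.ofReal_cpow (by positivity)]
      simp only [Pi.sub_apply, Pi.smul_apply, Pi.one_apply, smul_eq_mul]
      push_cast
      ring
  rw [e, Complex.norm_real, Real.norm_eq_abs] at hσ
  linarith [(abs_lt.1 hσ).1]

/-! ### A lower bound of Chebyshev type in residue classes -/

/-- By Chebyshev's bound, `∑ Λ(n) / n` over `n` in an interval `[e ^ u, e ^ (u + 1)]` is bounded. -/
lemma sum_mangoldt_div_le {s : Finset ℕ} {u : ℝ}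
    (hs : ∀ n ∈ s, 0 < n ∧ u ≤ log n ∧ log n ≤ u + 1) :
    ∑ n ∈ s, ArithmeticFunction.vonMangoldt n / (n : ℝ) ≤ (log 4 + 4) * exp 1 := by
  calc ∑ n ∈ s, ArithmeticFunction.vonMangoldt n / (n : ℝ)
      ≤ ∑ n ∈ s, ArithmeticFunction.vonMangoldt n * exp (-u) := by
        refine Finset.sum_le_sum fun n hn => ?_
        obtain ⟨h0, h1, -⟩ := hs n hn
        have h0' : (0:ℝ) < n := by exact_mod_cast h0
        rw [div_eq_mul_inv, Real.exp_neg]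
        refine mul_le_mul_of_nonneg_left (inv_anti₀ (exp_pos _) ?_)
          ArithmeticFunction.vonMangoldt_nonneg
        rwa [← Real.le_log_iff_exp_le h0']
    _ = (∑ n ∈ s, ArithmeticFunction.vonMangoldt n) * exp (-u) := by rw [Finset.sum_mul]
    _ ≤ Chebyshev.psi (exp (u + 1)) * exp (-u) := by
        refine mul_le_mul_of_nonneg_right ?_ (exp_pos _).le
        refine Finset.sum_le_sum_of_subset_of_nonneg (fun n hn => ?_)
          fun _ _ _ => ArithmeticFunction.vonMangoldt_nonneg
        obtain ⟨h0, -, h1⟩ := hs n hn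
        have h0' : (0:ℝ) < n := by exact_mod_cast h0
        rw [Finset.mem_Ioc]
        refine ⟨h0, Nat.le_floor ?_⟩
        rwa [← Real.log_le_iff_le_exp h0']
    _ ≤ (log 4 + 4) * exp (u + 1) * exp (-u) :=
        mul_le_mul_of_nonneg_right (Chebyshev.psi_le_const_mul_self (exp_pos _).le) (exp_pos _).le
    _ = (log 4 + 4) * exp 1 := by
        rw [mul_assoc, ← Real.exp_add]; ring_nf

/-- The Fejér-weighted sum of `Λ(n) / n` over `|L - log n| ≥ 1` is `O(1 / T)`, uniformly in `L`:
the kernel decays like `1 / (T k ^ 2)` where `k ≤ |L - log n| ≤ k + 1`. -/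
lemma far_sum_le : ∃ C : ℝ, 1 ≤ C ∧ ∀ (T : ℝ), 0 < T → ∀ (L : ℝ) (s : Finset ℕ),
    (∀ n ∈ s, 0 < n ∧ 1 ≤ |L - log n|) →
    ∑ n ∈ s, ArithmeticFunction.vonMangoldt n / (n : ℝ) * fejer T (L - log n) ≤ C / T := by
  set A : ℝ := (log 4 + 4) * exp 1
  have hA : 0 ≤ A := by positivity
  set Z : ℝ := ∑' k : ℕ, 1 / (k : ℝ) ^ 2
  have hZ : Summable fun k : ℕ => 1 / (k : ℝ) ^ 2 := Real.summable_one_div_nat_pow.2 one_lt_two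
  refine ⟨max 1 (2 * A * 4 * Z), le_max_left _ _, fun T hT L s hs => ?_⟩
  have hmaps : ∀ n ∈ s, ⌊|L - log n|⌋₊ ∈ s.image (fun n : ℕ => ⌊|L - log (n : ℝ)|⌋₊) := fun n hn =>
    Finset.mem_image_of_mem _ hn
  rw [← Finset.sum_fiberwise_of_maps_to hmaps]
  calc _ ≤ ∑ k ∈ s.image (fun n : ℕ => ⌊|L - log (n : ℝ)|⌋₊), (2 * A * 4 / T) * (1 / (k : ℝ) ^ 2) := by
        refine Finset.sum_le_sum fun k hk => ?_
        have hk1 : 1 ≤ k := by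
          obtain ⟨n, hn, rfl⟩ := Finset.mem_image.1 hk
          exact Nat.le_floor (by simpa using (hs n hn).2)
        have hk0 : (0:ℝ) < k := by exact_mod_cast hk1
        have hb : ∀ n ∈ s.filter (fun n : ℕ => ⌊|L - log (n : ℝ)|⌋₊ = k),
            0 < n ∧ (k : ℝ) ≤ |L - log n| ∧ |L - log n| ≤ k + 1 := by
          intro n hn
          obtain ⟨hns, hnk⟩ := Finset.mem_filter.1 hn
          refine ⟨(hs n hns).1, ?_, ?_⟩
          · rw [← hnk]; exact Nat.floor_le (abs_nonneg _)
          · rw [← hnk]; exact (Nat.lt_floor_add_one _).le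
        calc ∑ n ∈ s.filter (fun n : ℕ => ⌊|L - log (n : ℝ)|⌋₊ = k),
              ArithmeticFunction.vonMangoldt n / (n : ℝ) * fejer T (L - log n)
            ≤ ∑ n ∈ s.filter (fun n : ℕ => ⌊|L - log (n : ℝ)|⌋₊ = k),
              ArithmeticFunction.vonMangoldt n / (n : ℝ) * (4 / (T * k ^ 2)) := by
              refine Finset.sum_le_sum fun n hn => ?_
              obtain ⟨h0, h1, -⟩ := hb n hn
              have hne : L - log n ≠ 0 := by
                intro h; rw [h, abs_zero] at h1; linarith
              refine mul_le_mul_of_nonneg_left ((fejer_le_inv_sq hT hne).trans ?_)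
                (div_nonneg ArithmeticFunction.vonMangoldt_nonneg (Nat.cast_nonneg _))
              rw [← sq_abs (L - log n)]
              gcongr
          _ = (∑ n ∈ s.filter (fun n : ℕ => ⌊|L - log (n : ℝ)|⌋₊ = k),
              ArithmeticFunction.vonMangoldt n / (n : ℝ)) * (4 / (T * k ^ 2)) := by
              rw [Finset.sum_mul]
          _ ≤ (A + A) * (4 / (T * k ^ 2)) := by
              refine mul_le_mul_of_nonneg_right ?_ (by positivity)
              rw [← Finset.sum_filter_add_sum_filter_not _ (fun n : ℕ => log (n : ℝ) ≤ L)]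
              refine add_le_add (sum_mangoldt_div_le (u := L - k - 1) fun n hn => ?_)
                (sum_mangoldt_div_le (u := L + k) fun n hn => ?_)
              · obtain ⟨hn, hl⟩ := Finset.mem_filter.1 hn
                obtain ⟨h0, h1, h2⟩ := hb n hn
                rw [abs_of_nonneg (by linarith)] at h1 h2
                exact ⟨h0, by linarith, by linarith⟩
              · obtain ⟨hn, hl⟩ := Finset.mem_filter.1 hn
                obtain ⟨h0, h1, h2⟩ := hb n hn
                rw [abs_of_nonpos (by linarith)] at h1 h2
                exact ⟨h0, by linarith, by linarith⟩
          _ = (2 * A * 4 / T) * (1 / (k : ℝ) ^ 2) := by field_simp; ring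
    _ = (2 * A * 4 / T) * ∑ k ∈ s.image (fun n : ℕ => ⌊|L - log (n : ℝ)|⌋₊), (1 / (k : ℝ) ^ 2) := by
        rw [Finset.mul_sum]
    _ ≤ (2 * A * 4 / T) * Z := by
        refine mul_le_mul_of_nonneg_left (hZ.sum_le_tsum _ fun _ _ => by positivity) (by positivity)
    _ = (2 * A * 4 * Z) / T := by ring
    _ ≤ _ := by gcongr; exact le_max_right _ _

/-- The smoothed sum of `mangoldtOn S` is controlled by its partial sum up to `e ^ (L + 1)`; `C / T`
accounts for the terms with `|L - log n| ≥ 1`. -/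
lemma upper_smoothed {C : ℝ} (hC : ∀ (T : ℝ), 0 < T → ∀ (L : ℝ) (s : Finset ℕ),
    (∀ n ∈ s, 0 < n ∧ 1 ≤ |L - log n|) →
    ∑ n ∈ s, ArithmeticFunction.vonMangoldt n / (n : ℝ) * fejer T (L - log n) ≤ C / T)
    {Q : ℕ} (S : Finset (ZMod Q)) {T : ℝ} (hT : 0 < T) (L : ℝ) {σ : ℝ} (hσ : 1 < σ) :
    ∑' n : ℕ, mangoldtOn S n / (n : ℝ) ^ σ * fejer T (L - log n) ≤
      T * exp (1 - L) * ∑ n ∈ Finset.Ioc 0 ⌊exp (L + 1)⌋₊, mangoldtOn S n + C / T := by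
  have hn0 : ∀ n : ℕ, 0 ≤ mangoldtOn S n / (n : ℝ) ^ σ * fejer T (L - log n) := fun n =>
    mul_nonneg (div_nonneg (mangoldtOn_nonneg S n) (by positivity)) (fejer_nonneg hT _)
  refine Real.tsum_le_of_sum_le hn0 fun s => ?_
  have h0 : mangoldtOn S 0 = 0 := by simp [mangoldtOn]
  have hle : ∀ n : ℕ, mangoldtOn S n / (n : ℝ) ^ σ * fejer T (L - log n) ≤
      mangoldtOn S n / (n : ℝ) * fejer T (L - log n) := by
    intro n
    rcases Nat.eq_zero_or_pos n with rfl | hn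
    · simp [h0]
    have hn1 : (1:ℝ) ≤ n := by exact_mod_cast hn
    refine mul_le_mul_of_nonneg_right ?_ (fejer_nonneg hT _)
    refine div_le_div_of_nonneg_left (mangoldtOn_nonneg S n) (by linarith) ?_
    simpa using Real.rpow_le_rpow_of_exponent_le hn1 hσ.le
  refine (Finset.sum_le_sum fun n _ => hle n).trans ?_
  have hs : ∑ n ∈ s, mangoldtOn S n / (n : ℝ) * fejer T (L - log n) =
      ∑ n ∈ s.filter (fun n => 0 < n), mangoldtOn S n / (n : ℝ) * fejer T (L - log n) := by
    rw [Finset.sum_filter]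
    refine Finset.sum_congr rfl fun n _ => ?_
    rcases Nat.eq_zero_or_pos n with rfl | hn
    · simp [h0]
    · simp [hn]
  rw [hs, ← Finset.sum_filter_add_sum_filter_not _ (fun n : ℕ => |L - log (n : ℝ)| < 1)]
  refine add_le_add ?_ ?_
  · rw [Finset.mul_sum]
    calc _ ≤ ∑ n ∈ ((s.filter (fun n => 0 < n)).filter (fun n : ℕ => |L - log (n : ℝ)| < 1)),
          T * exp (1 - L) * mangoldtOn S n := by
          refine Finset.sum_le_sum fun n hn => ?_
          simp only [Finset.mem_filter] at hn
          obtain ⟨⟨-, hn0⟩, hn1⟩ := hn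
          have hn0' : (0:ℝ) < n := by exact_mod_cast hn0
          have h1 : exp (L - 1) ≤ n := by
            rw [← Real.le_log_iff_exp_le hn0']; linarith [(abs_lt.1 hn1).2]
          have h2 : (1:ℝ) / n ≤ exp (1 - L) := by
            rw [show 1 - L = -(L - 1) by ring, Real.exp_neg, one_div]
            exact inv_anti₀ (exp_pos _) h1
          calc mangoldtOn S n / (n : ℝ) * fejer T (L - log n)
              = mangoldtOn S n * ((1 / n) * fejer T (L - log n)) := by ring
            _ ≤ mangoldtOn S n * (exp (1 - L) * T) := by
              refine mul_le_mul_of_nonneg_left ?_ (mangoldtOn_nonneg S n)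
              exact mul_le_mul h2 (fejer_le hT _) (fejer_nonneg hT _) (exp_pos _).le
            _ = _ := by ring
      _ ≤ _ := by
          refine Finset.sum_le_sum_of_subset_of_nonneg (fun n hn => ?_) fun n _ _ =>
            mul_nonneg (by positivity) (mangoldtOn_nonneg S n)
          simp only [Finset.mem_filter] at hn
          obtain ⟨⟨-, hn0⟩, hn1⟩ := hn
          have hn0' : (0:ℝ) < n := by exact_mod_cast hn0
          rw [Finset.mem_Ioc]
          refine ⟨hn0, Nat.le_floor ?_⟩
          rw [← Real.log_le_iff_le_exp hn0']
          linarith [(abs_lt.1 hn1).1]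
  · refine le_trans ?_ (hC T hT L ((s.filter (fun n => 0 < n)).filter
      (fun n : ℕ => ¬ |L - log (n : ℝ)| < 1)) ?_)
    · refine Finset.sum_le_sum fun n _ => mul_le_mul_of_nonneg_right ?_ (fejer_nonneg hT _)
      exact div_le_div_of_nonneg_right (mangoldtOn_le S n) (Nat.cast_nonneg _)
    · intro n hn
      simp only [Finset.mem_filter, not_lt] at hn
      exact ⟨hn.1.2, hn.2⟩

/-- The smoothed sum of the constant function `1` is bounded below already by the terms with
`L < log n ≤ L + 1 / T`, where the kernel is at least `T / 2`. -/
lemma lower_smoothed {T : ℝ} (hT : 1 ≤ T) {L : ℝ} (hL : 2 * T ≤ exp L) :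
    1 / (4 * exp 1) ≤ ∑ n ∈ Finset.Ioc ⌊exp L⌋₊ ⌊exp (L + 1 / T)⌋₊,
      1 / (n : ℝ) * fejer T (L - log n) := by
  have hT0 : 0 < T := by linarith
  have hTi : 1 / T ≤ 1 := (div_le_one hT0).2 hT
  have hcard : exp L / (2 * T) ≤ ((Finset.Ioc ⌊exp L⌋₊ ⌊exp (L + 1 / T)⌋₊).card : ℝ) := by
    rw [Nat.card_Ioc]
    have h1 : (⌊exp L⌋₊ : ℝ) ≤ exp L := Nat.floor_le (exp_pos _).le
    have h2 : exp (L + 1 / T) < ⌊exp (L + 1 / T)⌋₊ + 1 := Nat.lt_floor_add_one _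
    have h3 : exp L * (1 / T + 1) ≤ exp (L + 1 / T) := by
      rw [Real.exp_add]
      exact mul_le_mul_of_nonneg_left (Real.add_one_le_exp _) (exp_pos _).le
    have h4 : (⌊exp (L + 1 / T)⌋₊ : ℝ) - ⌊exp L⌋₊ ≤ ((⌊exp (L + 1 / T)⌋₊ - ⌊exp L⌋₊ : ℕ) : ℝ) := by
      rw [sub_le_iff_le_add]
      norm_cast
      omega
    have h5 : 1 ≤ exp L / (2 * T) := by rw [le_div_iff₀ (by positivity)]; linarith
    have h6 : exp L * (1 / T) = 2 * (exp L / (2 * T)) := by field_simp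
    nlinarith
  have hterm : ∀ n ∈ Finset.Ioc ⌊exp L⌋₊ ⌊exp (L + 1 / T)⌋₊,
      exp (-(L + 1)) * (T / 2) ≤ 1 / (n : ℝ) * fejer T (L - log n) := by
    intro n hn
    obtain ⟨h1, h2⟩ := Finset.mem_Ioc.1 hn
    have hn0 : (0:ℝ) < n := by exact_mod_cast (Nat.zero_le _).trans_lt h1
    have h1' : exp L < n := (Nat.floor_lt (exp_pos _).le).1 h1
    have h2' : (n:ℝ) ≤ exp (L + 1 / T) := (Nat.le_floor_iff (exp_pos _).le).1 h2
    have h3 : L < log n := (Real.lt_log_iff_exp_lt hn0).2 h1'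
    have h4 : log n ≤ L + 1 / T := (Real.log_le_iff_le_exp hn0).2 h2'
    refine mul_le_mul ?_ (le_fejer hT0 (abs_le.2 ⟨by linarith, by
      have : 0 ≤ 1 / T := by positivity
      linarith⟩)) (by positivity) (by positivity)
    rw [Real.exp_neg, one_div]
    refine inv_anti₀ hn0 (h2'.trans ?_)
    exact Real.exp_le_exp.2 (by linarith)
  have := Finset.card_nsmul_le_sum _ _ _ hterm
  rw [nsmul_eq_mul] at this
  refine le_trans ?_ this
  calc 1 / (4 * exp 1) = exp L / (2 * T) * (exp (-(L + 1)) * (T / 2)) := by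
        rw [Real.exp_neg, Real.exp_add]; field_simp; norm_num
    _ ≤ _ := mul_le_mul_of_nonneg_right hcard (by positivity)

/-- The sum of `Λ` over residue classes in a set `S` of units mod `Q` is eventually at least
`c (|S| / φ(Q))² x`, with `c` independent of `Q` and `S`. One factor `|S| / φ(Q)` is the expected
density, the other comes from choosing `T` of size `φ(Q) / |S|` below. -/
theorem mangoldtOn_lower : ∃ c : ℝ, 0 < c ∧ ∀ (Q : ℕ) [NeZero Q] (S : Finset (ZMod Q)),
    (∀ a ∈ S, IsUnit a) → ∃ x₀ : ℝ, ∀ x ≥ x₀,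
      c * (S.card / Q.totient : ℝ) ^ 2 * x ≤ ∑ n ∈ Finset.Ioc 0 ⌊x⌋₊, mangoldtOn S n := by
  obtain ⟨C, hC1, hC⟩ := far_sum_le
  refine ⟨1 / (128 * exp 1 ^ 4 * C), by positivity, fun Q _ S hS => ?_⟩
  set κ : ℝ := S.card / Q.totient with hκ
  have hκ0 : 0 ≤ κ := by positivity
  rcases hκ0.eq_or_lt with h0 | hκ0
  · refine ⟨0, fun x _ => ?_⟩
    rw [← h0]
    simpa using Finset.sum_nonneg fun n _ => mangoldtOn_nonneg S n
  have hκ1 : κ ≤ 1 := by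
    have hQ : (0:ℝ) < Q.totient := by exact_mod_cast Nat.totient_pos.2 (NeZero.pos Q)
    rw [hκ, div_le_one hQ]
    have hsub : S ⊆ (Finset.univ : Finset (ZMod Q)ˣ).image (fun u : (ZMod Q)ˣ => (u : ZMod Q)) := by
      intro a ha
      obtain ⟨u, hu⟩ := hS a ha
      exact Finset.mem_image.2 ⟨u, Finset.mem_univ _, hu⟩
    have := (Finset.card_le_card hsub).trans Finset.card_image_le
    rw [Finset.card_univ, ZMod.card_units_eq_totient] at this
    exact_mod_cast this
  have he1 : 1 ≤ exp 1 := Real.one_le_exp zero_le_one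
  -- `T` is so large that the terms with `|L - log n| ≥ 1`, at most `C / T` in total, take up only a
  -- quarter of the main term `κ / (4 e)`.
  set T : ℝ := 16 * exp 1 * C / κ with hTdef
  clear_value κ
  have hT1 : 1 ≤ T := by
    rw [hTdef, le_div_iff₀ hκ0]
    nlinarith [mul_le_mul he1 hC1 zero_le_one (by positivity)]
  have hT0 : 0 < T := by linarith
  obtain ⟨L₀, hL₀⟩ := tauberian_mangoldtOn S hS hT0 (ε := κ / (16 * exp 1)) (by positivity)
  refine ⟨exp (max L₀ (log (2 * T)) + 1), fun x hx => ?_⟩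
  have hx0 : 0 < x := (exp_pos _).trans_le hx
  set L : ℝ := log x - 1 with hLdef
  have hxL : x = exp (L + 1) := by rw [hLdef, sub_add_cancel, Real.exp_log hx0]
  have hLm : max L₀ (log (2 * T)) ≤ L := by
    have := (Real.le_log_iff_exp_le hx0).2 hx
    linarith
  have hL1 : L₀ ≤ L := (le_max_left _ _).trans hLm
  have hL2 : 2 * T ≤ exp L := by
    rw [← Real.log_le_iff_le_exp (by positivity)]
    exact (le_max_right _ _).trans hLm
  set s := Finset.Ioc ⌊exp L⌋₊ ⌊exp (L + 1 / T)⌋₊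
  set P := ∑ n ∈ Finset.Ioc 0 ⌊exp (L + 1)⌋₊, mangoldtOn S n with hP
  have hev : ∀ᶠ σ : ℝ in 𝓝[>] 1, κ * ∑ n ∈ s, 1 / (n : ℝ) ^ σ * fejer T (L - log n)
      ≤ T * exp (1 - L) * P + C / T + κ / (16 * exp 1) := by
    filter_upwards [hL₀ L hL1, self_mem_nhdsWithin] with σ hσ hσ1
    obtain ⟨h1, h2, h3⟩ := hσ
    rw [← hκ] at h3
    have h4 := upper_smoothed hC S hT0 L hσ1
    have h5 : ∑ n ∈ s, 1 / (n : ℝ) ^ σ * fejer T (L - log n) ≤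
        ∑' n : ℕ, 1 / (n : ℝ) ^ σ * fejer T (L - log n) :=
      h2.sum_le_tsum _ fun n _ => mul_nonneg (by positivity) (fejer_nonneg hT0 _)
    have h6 := mul_le_mul_of_nonneg_left h5 hκ0.le
    linarith
  have hlim : Tendsto (fun σ : ℝ => κ * ∑ n ∈ s, 1 / (n : ℝ) ^ σ * fejer T (L - log n)) (𝓝[>] 1)
      (𝓝 (κ * ∑ n ∈ s, 1 / (n : ℝ) ^ (1:ℝ) * fejer T (L - log n))) := by
    refine Tendsto.mono_left ?_ nhdsWithin_le_nhds
    refine Tendsto.const_mul _ (tendsto_finsetSum _ fun n hn => Tendsto.mul_const _ ?_)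
    have hn0 : 0 < n := (Nat.zero_le _).trans_lt (Finset.mem_Ioc.1 hn).1
    have hn0' : (0:ℝ) < n := by exact_mod_cast hn0
    refine Tendsto.div tendsto_const_nhds ?_ (by simpa using hn0.ne')
    exact (Real.continuous_const_rpow hn0'.ne').tendsto 1
  have hfin := le_of_tendsto hlim hev
  simp only [Real.rpow_one] at hfin
  have hlow := mul_le_mul_of_nonneg_left (lower_smoothed hT1 hL2) hκ0.le
  have hCT : C / T = κ / (16 * exp 1) := by rw [hTdef]; field_simp
  have hmain : κ / (8 * exp 1) ≤ T * exp (1 - L) * P := by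
    have : κ * (1 / (4 * exp 1)) = κ / (8 * exp 1) + κ / (16 * exp 1) + κ / (16 * exp 1) := by
      field_simp; norm_num
    linarith
  rw [hxL, ← hP]
  have h7 := mul_le_mul_of_nonneg_left hmain (show 0 ≤ exp (L - 1) / T by positivity)
  have h8 : exp (L - 1) / T * (T * exp (1 - L) * P) = P := by
    have : exp (L - 1) * exp (1 - L) = 1 := by rw [← Real.exp_add]; simp
    calc _ = (exp (L - 1) * exp (1 - L)) * P * (T / T) := by ring
      _ = P := by rw [this, div_self hT0.ne']; ring
  rw [h8] at h7
  refine le_of_eq_of_le ?_ h7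
  have h9 : exp (L + 1) = exp (L - 1) * exp 1 ^ 2 := by
    rw [← Real.exp_nat_mul, ← Real.exp_add]; congr 1; push_cast; ring
  rw [h9, hTdef]
  generalize exp (L - 1) = b
  have he0 : exp 1 ≠ 0 := (exp_pos 1).ne'
  have hC0 : C ≠ 0 := by linarith
  revert he0
  generalize exp 1 = e
  intro he0
  field_simp
  ring

/-! ### Counting rough primes from below -/

/-- The number of residues `a` mod `n` such that `a` and `a - 1` are both invertible. -/
noncomputable def shiftedUnits (n : ℕ) : ℕ := Nat.card {a : ZMod n // IsUnit a ∧ IsUnit (a - 1)}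

lemma shiftedUnits_mul {m n : ℕ} (h : m.Coprime n) :
    shiftedUnits (m * n) = shiftedUnits m * shiftedUnits n := by
  rw [shiftedUnits, shiftedUnits, shiftedUnits, ← Nat.card_prod]
  refine Nat.card_congr (Equiv.trans ((ZMod.chineseRemainder h).toEquiv.subtypeEquiv
    (q := fun c => (IsUnit c.1 ∧ IsUnit (c.1 - 1)) ∧ (IsUnit c.2 ∧ IsUnit (c.2 - 1)))
    fun a => ?_) (Equiv.subtypeProdEquivProd (p := fun c : ZMod m => IsUnit c ∧ IsUnit (c - 1))
      (q := fun c : ZMod n => IsUnit c ∧ IsUnit (c - 1))))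
  have e1 : IsUnit a ↔ IsUnit (ZMod.chineseRemainder h a) := by simp
  have e2 : IsUnit (a - 1) ↔ IsUnit (ZMod.chineseRemainder h a - 1) := by
    rw [← map_one (ZMod.chineseRemainder h), ← map_sub]
    exact (MulEquiv.isUnit_map (ZMod.chineseRemainder h)).symm
  rw [e1, e2, Prod.isUnit_iff, Prod.isUnit_iff]
  simp only [Prod.fst_sub, Prod.snd_sub, Prod.fst_one, Prod.snd_one, RingEquiv.toEquiv_eq_coe,
    EquivLike.coe_coe]
  tauto

lemma shiftedUnits_prime {q : ℕ} (hq : q.Prime) : shiftedUnits q = q - 2 := by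
  have := Fact.mk hq
  classical
  have : Nat.card {a : ZMod q // IsUnit a ∧ IsUnit (a - 1)} =
      (Finset.univ \ {0, 1} : Finset (ZMod q)).card := by
    rw [Nat.card_eq_fintype_card]
    refine Fintype.card_of_subtype _ fun a => ?_
    simp [isUnit_iff_ne_zero, sub_eq_zero, not_or]
  rw [shiftedUnits, this, Finset.card_sdiff_of_subset (Finset.subset_univ _), Finset.card_univ,
    ZMod.card, Finset.card_pair zero_ne_one]

/-- The odd primes less than `Y`. -/
def oddPrimes (Y : ℕ) : Finset ℕ := (Finset.range Y).filter fun q => q.Prime ∧ q ≠ 2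

lemma mem_oddPrimes {Y q : ℕ} : q ∈ oddPrimes Y ↔ q < Y ∧ q.Prime ∧ q ≠ 2 := by
  simp [oddPrimes]

/-- The proportion `∏ (q - 2) / (q - 1)`, over odd primes `q < Y`, of the units `a` modulo the product
of these primes for which `a - 1` is a unit as well. -/
noncomputable def kap (Y : ℕ) : ℝ := ∏ q ∈ oddPrimes Y, ((q : ℝ) - 2) / (q - 1)

lemma kap_pos (Y : ℕ) : 0 < kap Y := by
  refine Finset.prod_pos fun q hq => ?_
  obtain ⟨-, h1, h2⟩ := mem_oddPrimes.1 hq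
  have h3 : 3 ≤ q := by
    have := h1.two_le
    omega
  have h3' : (3:ℝ) ≤ q := by exact_mod_cast h3
  exact div_pos (by linarith) (by linarith)

lemma shiftedUnits_div_totient (P : Finset ℕ) (hP : ∀ q ∈ P, q.Prime ∧ q ≠ 2) :
    (shiftedUnits (∏ q ∈ P, q) : ℝ) / (Nat.totient (∏ q ∈ P, q) : ℝ) =
      ∏ q ∈ P, ((q : ℝ) - 2) / (q - 1) := by
  induction P using Finset.induction_on with
  | empty =>
    have : shiftedUnits 1 = 1 := by
      rw [shiftedUnits, Nat.card_eq_one_iff_unique]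
      exact ⟨⟨fun a b => Subtype.ext (Subsingleton.elim _ _)⟩,
        ⟨⟨0, isUnit_of_subsingleton _, isUnit_of_subsingleton _⟩⟩⟩
    simp [this]
  | insert q P hq ih =>
    have hqp := hP q (Finset.mem_insert_self _ _)
    have hcop : q.Coprime (∏ q ∈ P, q) := by
      refine Nat.Coprime.prod_right fun r hr => ?_
      refine (Nat.coprime_primes hqp.1 (hP r (Finset.mem_insert_of_mem hr)).1).2 ?_
      rintro rfl; exact hq hr
    rw [Finset.prod_insert hq, Finset.prod_insert hq, shiftedUnits_mul hcop,
      Nat.totient_mul hcop, ← ih fun r hr => hP r (Finset.mem_insert_of_mem hr),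
      shiftedUnits_prime hqp.1, Nat.totient_prime hqp.1, Nat.cast_mul, Nat.cast_mul,
      Nat.cast_sub hqp.1.two_le, Nat.cast_sub hqp.1.one_le, mul_div_mul_comm]
    simp

/-- There are `≫ kap Y ^ 2 * X / log X` primes up to `X` that are `Y`-rough, with an absolute implied
constant; `X₀` depends on `Y`. -/
lemma rough_lower : ∃ c : ℝ, 0 < c ∧ ∀ Y : ℕ, ∃ X₀ : ℕ, ∀ X ≥ X₀,
    c * kap Y ^ 2 * X / log X ≤ ({p : ℕ | p ≤ X ∧ p.Prime ∧ IsRough Y p}.ncard : ℝ) := by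
  classical
  obtain ⟨c, hc, hlow⟩ := mangoldtOn_lower
  refine ⟨c / 2, by positivity, fun Y => ?_⟩
  have hP : ∀ q ∈ oddPrimes Y, q.Prime ∧ q ≠ 2 := fun q hq => (mem_oddPrimes.1 hq).2
  set Q := ∏ q ∈ oddPrimes Y, q with hQ
  have : NeZero Q := ⟨Finset.prod_ne_zero_iff.2 fun q hq => (hP q hq).1.ne_zero⟩
  set S : Finset (ZMod Q) := Finset.univ.filter fun a => IsUnit a ∧ IsUnit (a - 1) with hS
  have hcard : (S.card : ℝ) / Q.totient = kap Y := by
    rw [kap, ← shiftedUnits_div_totient _ hP, shiftedUnits, Nat.card_eq_fintype_card,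
      Fintype.card_subtype]
  obtain ⟨x₀, hx₀⟩ := hlow Q S fun a ha => (Finset.mem_filter.1 ha).2.1
  rw [hcard] at hx₀
  have hκ0 := kap_pos Y
  have hev : ∀ᶠ X : ℕ in atTop, 2 * √(X:ℝ) * log X ≤ c / 2 * kap Y ^ 2 * X := by
    have h1 := (isLittleO_log_rpow_atTop (show (0:ℝ) < 1 / 2 by norm_num)).comp_tendsto
      tendsto_natCast_atTop_atTop
    filter_upwards [h1.bound (show (0:ℝ) < c / 4 * kap Y ^ 2 by positivity)] with X hX
    simp only [Function.comp, norm_eq_abs, ← Real.sqrt_eq_rpow] at hX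
    rw [abs_of_nonneg (Real.sqrt_nonneg _)] at hX
    have h2 := mul_le_mul_of_nonneg_left ((le_abs_self _).trans hX)
      (show 0 ≤ 2 * √(X:ℝ) by positivity)
    refine h2.trans (le_of_eq ?_)
    have h3 : √(X:ℝ) * √(X:ℝ) = X := Real.mul_self_sqrt (Nat.cast_nonneg _)
    linear_combination (c / 2 * kap Y ^ 2) * h3
  obtain ⟨X₁, hX₁⟩ := eventually_atTop.1 hev
  refine ⟨max (max X₁ 2) ⌈x₀⌉₊, fun X hX => ?_⟩
  have hX1 : X₁ ≤ X := le_trans (by simp) hX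
  have hX2 : 2 ≤ X := le_trans (by simp) hX
  have hX3 : x₀ ≤ X := Nat.ceil_le.1 (le_trans (by simp) hX)
  have hX2' : (2:ℝ) ≤ X := by exact_mod_cast hX2
  have hlog : 0 < log (X:ℝ) := Real.log_pos (by linarith)
  have h1 := hx₀ X hX3
  rw [Nat.floor_natCast] at h1
  set R : Finset ℕ := (Finset.Ioc 0 X).filter fun p => p.Prime ∧ (p : ZMod Q) ∈ S with hR
  -- Proper prime powers contribute at most `ψ(X) - θ(X) ≤ 2 √X log X`.
  have hsum : ∑ n ∈ Finset.Ioc 0 X, mangoldtOn S n ≤ R.card * log X + 2 * √(X:ℝ) * log X := by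
    calc _ ≤ ∑ n ∈ Finset.Ioc 0 X, ((if n.Prime ∧ (n : ZMod Q) ∈ S then log X else 0) +
            (if ¬ n.Prime then ArithmeticFunction.vonMangoldt n else 0)) := by
          refine Finset.sum_le_sum fun n hn => ?_
          obtain ⟨hn0, hnX⟩ := Finset.mem_Ioc.1 hn
          by_cases hp : n.Prime
          · simp only [hp, true_and, not_true_eq_false, if_false, add_zero, mangoldtOn]
            split_ifs
            · rw [ArithmeticFunction.vonMangoldt_apply_prime hp]
              exact Real.log_le_log (by exact_mod_cast hn0) (by exact_mod_cast hnX)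
            · exact le_rfl
          · simpa [hp] using mangoldtOn_le S n
      _ = R.card * log X + (Chebyshev.psi X - Chebyshev.theta X) := by
          rw [Finset.sum_add_distrib, ← Finset.sum_filter, ← Finset.sum_filter, Finset.sum_const,
            nsmul_eq_mul, Chebyshev.psi_sub_theta_eq_sum_not_prime, Nat.floor_natCast]
      _ ≤ _ := by
          gcongr
          exact (le_abs_self _).trans (Chebyshev.abs_psi_sub_theta_le_sqrt_mul_log (by linarith))
  have hsub : (R : Set ℕ) ⊆ {p : ℕ | p ≤ X ∧ p.Prime ∧ IsRough Y p} := by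
    intro p hp
    simp only [hR, Finset.coe_filter, Set.mem_ofPred_eq, Finset.mem_Ioc] at hp
    obtain ⟨⟨-, hpX⟩, hpp, hpS⟩ := hp
    refine ⟨hpX, hpp, fun q hq hqd hq2 => ?_⟩
    by_contra hlt
    have hqP : q ∈ oddPrimes Y := mem_oddPrimes.2 ⟨by exact_mod_cast not_le.1 hlt, hq, hq2⟩
    have hqQ : q ∣ Q := Finset.dvd_prod_of_mem _ hqP
    have := Fact.mk hq
    have hu := ((Finset.mem_filter.1 hpS).2.2).map (ZMod.castHom hqQ (ZMod q))
    rw [map_sub, map_one, map_natCast] at hu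
    have h0 : ((p - 1 : ℕ) : ZMod q) = 0 := (ZMod.natCast_eq_zero_iff _ _).2 hqd
    rw [Nat.cast_sub hpp.one_le, Nat.cast_one] at h0
    rw [h0] at hu
    exact not_isUnit_zero hu
  have hfin : ({p : ℕ | p ≤ X ∧ p.Prime ∧ IsRough Y p}).Finite :=
    (Set.finite_Iic X).subset fun p hp => hp.1
  have hle : (R.card : ℝ) ≤ ({p : ℕ | p ≤ X ∧ p.Prime ∧ IsRough Y p}.ncard : ℝ) := by
    rw [← Set.ncard_coe_finset]
    exact_mod_cast Set.ncard_le_ncard hsub hfin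
  refine le_trans ?_ hle
  rw [div_le_iff₀ hlog]
  have := hX₁ X hX1
  linarith

/-! ### The size of the density of rough residues -/

lemma oddPrimes_step (k : ℕ) (hk : 1 ≤ k) :
    oddPrimes (6 * (k + 1)) ⊆ oddPrimes (6 * k) ∪ {6 * k + 1, 6 * k + 5} := by
  intro q hq
  obtain ⟨h1, h2, h3⟩ := mem_oddPrimes.1 hq
  rw [Finset.mem_union, mem_oddPrimes]
  by_cases h : q < 6 * k
  · exact Or.inl ⟨h, h2, h3⟩
  · right
    have h4 : ¬ 2 ∣ q := fun hd => h3 ((Nat.prime_dvd_prime_iff_eq Nat.prime_two h2).1 hd).symm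
    have h5 : ¬ 3 ∣ q := fun hd => by
      have := (Nat.prime_dvd_prime_iff_eq Nat.prime_three h2).1 hd
      omega
    simp only [Finset.mem_insert, Finset.mem_singleton]
    omega

lemma kap_step (k : ℕ) (hk : 1 ≤ k) : kap (6 * k) * (1 - 1 / (6 * k : ℝ)) ^ 2 ≤
    kap (6 * (k + 1)) := by
  have hk1 : (1:ℝ) ≤ k := by exact_mod_cast hk
  have hdisj : Disjoint (oddPrimes (6 * k)) {6 * k + 1, 6 * k + 5} := by
    rw [Finset.disjoint_left]
    intro q hq hq'
    have := (mem_oddPrimes.1 hq).1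
    simp only [Finset.mem_insert, Finset.mem_singleton] at hq'
    omega
  have hle : ∏ q ∈ oddPrimes (6 * k) ∪ {6 * k + 1, 6 * k + 5}, ((q : ℝ) - 2) / (q - 1) ≤
      kap (6 * (k + 1)) := by
    have hge : ∀ q ∈ oddPrimes (6 * k) ∪ {6 * k + 1, 6 * k + 5}, (3:ℝ) ≤ q := by
      intro q hq
      have h3 : 3 ≤ q := by
        simp only [Finset.mem_union, mem_oddPrimes, Finset.mem_insert, Finset.mem_singleton] at hq
        rcases hq with ⟨-, h1, h2⟩ | h | h
        · have := h1.two_le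
          omega
        · omega
        · omega
      exact_mod_cast h3
    refine Finset.prod_le_prod_of_subset_of_le_one (oddPrimes_step k hk) (fun q hq => ?_)
      fun q hq _ => ?_
    · have := hge q hq
      exact div_nonneg (by linarith) (by linarith)
    · have := hge q hq
      rw [div_le_one (by linarith)]
      linarith
  refine le_trans ?_ hle
  rw [Finset.prod_union hdisj, Finset.prod_pair (by omega)]
  refine mul_le_mul_of_nonneg_left ?_ (kap_pos _).le
  rw [sq]
  push_cast
  have h0 : (0:ℝ) ≤ 1 - 1 / (6 * k) := by
    rw [sub_nonneg, div_le_one (by linarith)]; linarith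
  refine mul_le_mul ?_ ?_ h0 (div_nonneg (by linarith) (by linarith))
  · rw [show (6 * (k:ℝ) + 1 - 2) / (6 * k + 1 - 1) = 1 - 1 / (6 * k) by field_simp; ring]
  · have : (6 * (k:ℝ) + 5 - 2) / (6 * k + 5 - 1) = 1 - 1 / (6 * k + 4) := by
      have : 6 * (k:ℝ) + 4 ≠ 0 := by linarith
      rw [show 6 * (k:ℝ) + 5 - 1 = 6 * k + 4 by ring]
      field_simp
      ring
    rw [this]
    gcongr
    linarith

/-- `kap (6 * k) ^ 5 * k ^ 2` is nondecreasing for `k ≥ 5`: passing from `k` to `k + 1` costs `kap` at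
most a factor `(1 - 1 / (6k)) ^ 2`, and `(1 - 1 / (6k)) ^ 5 ≥ k / (k + 1)` by Bernoulli. -/
lemma kap_pow_mono (k : ℕ) (hk : 5 ≤ k) :
    kap (6 * k) ^ 5 * (k : ℝ) ^ 2 ≤ kap (6 * (k + 1)) ^ 5 * ((k : ℝ) + 1) ^ 2 := by
  have hk5 : (5:ℝ) ≤ k := by exact_mod_cast hk
  have hκ := kap_pos (6 * k)
  set t : ℝ := 1 - 1 / (6 * k) with ht
  have ht0 : 0 ≤ t := by
    rw [ht, sub_nonneg, div_le_one (by linarith)]; linarith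
  have h1 : (k : ℝ) ≤ t ^ 5 * (k + 1) := by
    have hb : 1 + (5:ℕ) * (-(1 / (6 * (k:ℝ)))) ≤ t ^ 5 := by
      have hinv : 1 / (6 * (k:ℝ)) ≤ 1 := by rw [div_le_one (by linarith)]; linarith
      have := one_add_mul_le_pow (a := -(1 / (6 * (k:ℝ)))) (by linarith) 5
      rwa [← sub_eq_add_neg 1 (1 / (6 * (k:ℝ)))] at this
    have h2 : (k:ℝ) ≤ (1 + (5:ℕ) * (-(1 / (6 * (k:ℝ))))) * (k + 1) := by
      have : (1 + ((5:ℕ):ℝ) * (-(1 / (6 * (k:ℝ))))) * (k + 1) = k + (k - 5) / (6 * k) := by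
        push_cast; field_simp; ring
      rw [this]
      have : 0 ≤ ((k:ℝ) - 5) / (6 * k) := div_nonneg (by linarith) (by linarith)
      linarith
    exact h2.trans (mul_le_mul_of_nonneg_right hb (by linarith))
  calc kap (6 * k) ^ 5 * (k : ℝ) ^ 2 ≤ kap (6 * k) ^ 5 * (t ^ 5 * (k + 1)) ^ 2 := by gcongr
    _ = (kap (6 * k) * t ^ 2) ^ 5 * ((k : ℝ) + 1) ^ 2 := by ring
    _ ≤ _ := by
      gcongr
      exact kap_step k (by omega)

lemma kap_sq_lower : ∃ c : ℝ, 0 < c ∧ ∀ k : ℕ, 5 ≤ k →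
    c * (k : ℝ) ^ (-(4 / 5) : ℝ) ≤ kap (6 * k) ^ 2 := by
  set c₀ : ℝ := kap 30 ^ 5 * 25 with hc₀
  have h0 : 0 < c₀ := by have := kap_pos 30; positivity
  have hmono : ∀ k : ℕ, 5 ≤ k → c₀ ≤ kap (6 * k) ^ 5 * (k : ℝ) ^ 2 := by
    intro k hk
    induction k, hk using Nat.le_induction with
    | base => norm_num [hc₀]
    | succ k hk ih => exact_mod_cast ih.trans (kap_pow_mono k hk)
  refine ⟨(c₀ ^ 2) ^ (1 / 5 : ℝ), by positivity, fun k hk => ?_⟩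
  have hk0 : (0:ℝ) < k := by exact_mod_cast (by omega : 0 < k)
  have hκ := kap_pos (6 * k)
  rw [← pow_le_pow_iff_left₀ (by positivity) (by positivity) (show (5:ℕ) ≠ 0 by norm_num), mul_pow,
    ← Real.rpow_mul_natCast (by positivity), ← Real.rpow_mul_natCast hk0.le]
  rw [show (1 / 5 : ℝ) * (5:ℕ) = 1 by norm_num, show -(4 / 5 : ℝ) * (5:ℕ) = -(4:ℕ) by norm_num,
    Real.rpow_one, Real.rpow_neg hk0.le, Real.rpow_natCast, ← div_eq_mul_inv,
    div_le_iff₀ (by positivity)]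
  calc c₀ ^ 2 ≤ (kap (6 * k) ^ 5 * (k : ℝ) ^ 2) ^ 2 := by
        gcongr
        exact hmono k hk
    _ = _ := by ring

/-! ### Primes congruent to one modulo a prime -/

/-- The part of `n!` prime to `q` divides `∏_{k ≤ n} (q k + 1)`: modulo that part `q` has an inverse
`s`, and the product is `q ^ n ∏_{k ≤ n} (k + s)`, where `n! ∣ ∏_{k ≤ n} (k + s)`. -/
lemma ordCompl_factorial_dvd {q n : ℕ} (hq : q.Prime) :
    n.factorial / q ^ n.factorial.factorization q ∣ ∏ k ∈ Finset.range n, (q * (k + 1) + 1) := by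
  set m := n.factorial / q ^ n.factorial.factorization q with hm
  have hm0 : 0 < m := Nat.ordCompl_pos q n.factorial_ne_zero
  have : NeZero m := ⟨hm0.ne'⟩
  have hcop : q.Coprime m := Nat.coprime_ordCompl hq n.factorial_ne_zero
  rw [← ZMod.natCast_eq_zero_iff]
  set s : ℕ := ((q : ZMod m)⁻¹).val with hs
  have hqs : (q : ZMod m) * (s : ZMod m) = 1 := by
    rw [hs, ZMod.natCast_zmod_val, ZMod.coe_mul_inv_eq_one q hcop]
  have h1 : ((∏ k ∈ Finset.range n, (q * (k + 1) + 1) : ℕ) : ZMod m) =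
      (q : ZMod m) ^ n * (((s + 1).ascFactorial n : ℕ) : ZMod m) := by
    rw [Nat.ascFactorial_eq_prod_range, Nat.cast_prod, Nat.cast_prod, ← Finset.card_range n,
      ← Finset.prod_const, Finset.card_range, ← Finset.prod_mul_distrib]
    refine Finset.prod_congr rfl fun k _ => ?_
    push_cast
    linear_combination -hqs
  rw [h1, (ZMod.natCast_eq_zero_iff _ _).2 ((Nat.ordCompl_dvd _ _).trans
    (Nat.factorial_dvd_ascFactorial _ _)), mul_zero]

/-- The product of the primes `p ≡ 1 (mod q)` in `(X / q, X]` is at most `q ^ (2 n) (n + 1)` with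
`n = X / q`, and each of them is at least `n + 1`. -/
lemma pow_card_primes_le {q n X : ℕ} (hq : q.Prime) (hn : n = X / q) (hn1 : 1 ≤ n) :
    (n + 1) ^ ((Finset.Ioc n X).filter fun p => p.Prime ∧ q ∣ p - 1).card ≤
      q ^ (2 * n) * (n + 1) := by
  set P := (Finset.Ioc n X).filter fun p => p.Prime ∧ q ∣ p - 1 with hP
  have hmem : ∀ p ∈ P, n < p ∧ p ≤ X ∧ p.Prime ∧ q ∣ p - 1 := fun p hp => by
    simpa [hP, and_assoc] using hp
  set a := n.factorial.factorization q
  set m := n.factorial / q ^ a with hm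
  set A := ∏ k ∈ Finset.range n, (q * (k + 1) + 1) with hA
  have hmA : m ∣ A := ordCompl_factorial_dvd hq
  have hPA : ∏ p ∈ P, p ∣ A := by
    refine Finset.prod_primes_dvd _ (fun p hp => (hmem p hp).2.2.1.prime) fun p hp => ?_
    obtain ⟨h1, h2, h3, k, hk⟩ := hmem p hp
    have hp2 := h3.two_le
    have hk0 : k ≠ 0 := by rintro rfl; omega
    have hpk : p = q * (k - 1 + 1) + 1 := by
      rw [Nat.sub_add_cancel (Nat.pos_of_ne_zero hk0), ← hk]; omega
    have hkn : k ≤ n := by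
      rw [hn, Nat.le_div_iff_mul_le hq.pos, mul_comm, ← hk]; omega
    rw [hpk]
    exact Finset.dvd_prod_of_mem (fun k => q * (k + 1) + 1)
      (Finset.mem_range.2 (by omega : k - 1 < n))
  have hcop : Nat.Coprime m (∏ p ∈ P, p) := by
    refine Nat.Coprime.prod_right fun p hp => ?_
    obtain ⟨h1, h2, h3, -⟩ := hmem p hp
    refine Nat.Coprime.symm ((h3.coprime_iff_not_dvd).2 fun hd => ?_)
    exact absurd ((h3.dvd_factorial).1 (hd.trans (Nat.ordCompl_dvd _ _))) (by omega)
  have hA0 : 0 < A := Finset.prod_pos fun k _ => Nat.succ_pos _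
  have h1 : m * ∏ p ∈ P, p ≤ A := Nat.le_of_dvd hA0 (hcop.mul_dvd_of_dvd_of_dvd hmA hPA)
  have h2 : (n + 1) ^ P.card ≤ ∏ p ∈ P, p :=
    Finset.pow_card_le_prod _ _ _ fun p hp => (hmem p hp).1
  have h3 : A ≤ q ^ n * (n + 1).factorial := by
    calc A ≤ ∏ k ∈ Finset.range n, (q * (k + 2)) := by
          refine Finset.prod_le_prod' fun k _ => ?_
          nlinarith [hq.two_le]
      _ = q ^ n * (n + 1).factorial := by
          rw [Finset.prod_mul_distrib, Finset.prod_const, Finset.card_range,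
            ← Finset.prod_range_add_one_eq_factorial, Finset.prod_range_succ' _ n]
          simp
  have h4 : q ^ a * m = n.factorial := Nat.ordProj_mul_ordCompl_eq_self _ _
  have h5 : a ≤ n := by
    have := Fact.mk hq
    have h6 := sub_one_mul_padicValNat_factorial (p := q) n
    have h7 : padicValNat q n.factorial = a := (Nat.factorization_def _ hq).symm
    rw [h7] at h6
    have : a ≤ (q - 1) * a := Nat.le_mul_of_pos_left _ (by have := hq.two_le; omega)
    omega
  have h8 : n.factorial * (n + 1) ^ P.card ≤ n.factorial * (q ^ (2 * n) * (n + 1)) := by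
    calc n.factorial * (n + 1) ^ P.card = q ^ a * (m * (n + 1) ^ P.card) := by rw [← h4]; ring
      _ ≤ q ^ n * (q ^ n * (n + 1).factorial) := by
        refine Nat.mul_le_mul (Nat.pow_le_pow_right hq.pos h5) (le_trans ?_ (h1.trans h3))
        exact Nat.mul_le_mul_left _ h2
      _ = _ := by rw [Nat.factorial_succ, two_mul, pow_add]; ring
  exact Nat.le_of_mul_le_mul_left h8 n.factorial_pos

/-- An upper bound for `π(X; q, 1)` that loses a factor `1 + log q`. The assumption `q ^ 2 ≤ X` makes
`log (X / q)` at least `(log X) / 2`. -/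
lemma card_primes_mod_one_le {q X : ℕ} (hq : q.Prime) (hqX : q * q ≤ X) :
    (((Finset.Ioc 0 X).filter fun p => p.Prime ∧ q ∣ p - 1).card : ℝ) ≤
      (6 + 4 * log 4) * ((X : ℝ) / q) * (1 + log q) / log X := by
  set n := X / q with hn
  set x : ℝ := (X : ℝ) / q with hx
  have hq2 := hq.two_le
  have hqn : q ≤ n := (Nat.le_div_iff_mul_le hq.pos).2 hqX
  have hn1 : 1 ≤ n := by omega
  have hq0 : (0:ℝ) < q := by exact_mod_cast hq.pos
  have hq1 : (2:ℝ) ≤ q := by exact_mod_cast hq2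
  have hqX' : (q:ℝ) * q ≤ X := by exact_mod_cast hqX
  have hX4 : (4:ℝ) ≤ X := by nlinarith
  have hX0 : (0:ℝ) < X := by linarith
  have hxq : (q:ℝ) ≤ x := by rw [hx, le_div_iff₀ hq0]; exact hqX'
  have hx0 : 0 < x := by linarith
  have hxx : (X:ℝ) ≤ x * x := by
    have : (X:ℝ) = x * q := by rw [hx]; field_simp
    rw [this]; gcongr
  have hlX : 0 < log X := Real.log_pos (by linarith)
  have hlq : 0 ≤ log q := Real.log_nonneg (by linarith)
  have hlx : log X ≤ 2 * log x := by
    have := Real.log_le_log hX0 hxx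
    rw [Real.log_mul hx0.ne' hx0.ne'] at this
    linarith
  have hnx : (n : ℝ) ≤ x := Nat.cast_div_le
  have hxn : x ≤ n + 1 := by
    have := Nat.lt_floor_add_one x
    rw [hx, Nat.floor_div_eq_div] at this
    exact this.le
  have hfloor : ⌊x⌋₊ = n := by rw [hx, Nat.floor_div_eq_div]
  -- The primes `p ≤ n` are bounded by all of `π(n)`, whatever their residue mod `q`.
  have hsmall : (Nat.primeCounting n : ℝ) ≤ (4 + 4 * log 4) * x / log X := by
    have h1 := Chebyshev.pi_le_log4_mul_div (x := x) (by linarith)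
    rw [hfloor] at h1
    refine h1.trans ?_
    rw [Real.log_sqrt hx0.le]
    have h2 : log 4 * x / (log x / 2) ≤ 4 * log 4 * x / log X := by
      rw [div_le_div_iff₀ (by linarith) hlX]
      have : 0 ≤ log 4 * x := mul_nonneg (Real.log_nonneg (by norm_num)) hx0.le
      nlinarith
    have h3 : √x ≤ 4 * x / log X := by
      rw [le_div_iff₀ hlX]
      have h4 : log x ≤ 2 * √x := by
        have := Real.log_le_self (Real.sqrt_nonneg x)
        rw [Real.log_sqrt hx0.le] at this
        linarith
      have h5 := Real.mul_self_sqrt hx0.le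
      have h6 := Real.sqrt_nonneg x
      nlinarith
    calc _ ≤ _ := add_le_add h2 h3
      _ = _ := by ring
  -- Taking logarithms in `pow_card_primes_le` gives `(N - 1) log (n + 1) ≤ 2 n log q`.
  have hbig : (((Finset.Ioc n X).filter fun p => p.Prime ∧ q ∣ p - 1).card : ℝ) ≤
      (2 + 4 * log q) * x / log X := by
    have h1 := pow_card_primes_le hq hn hn1
    set N := ((Finset.Ioc n X).filter fun p => p.Prime ∧ q ∣ p - 1).card
    have h2 : ((n:ℝ) + 1) ^ N ≤ (q:ℝ) ^ (2 * n) * (n + 1) := by exact_mod_cast h1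
    have hn0 : (0:ℝ) < (n:ℝ) + 1 := by positivity
    have h3 := Real.log_le_log (by positivity) h2
    rw [Real.log_mul (by positivity) hn0.ne', Real.log_pow, Real.log_pow] at h3
    push_cast at h3
    have h4 : log x ≤ log ((n:ℝ) + 1) := Real.log_le_log hx0 hxn
    have h5 : log X ≤ 2 * x := by
      have := Real.log_le_self hx0.le
      linarith
    have hl0 : 0 < log ((n:ℝ) + 1) := by linarith
    have h6 : ((N:ℝ) - 1) * log ((n:ℝ) + 1) ≤ 2 * x * log q := by
      have : 2 * (n:ℝ) * log q ≤ 2 * x * log q := by gcongr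
      linarith
    rw [le_div_iff₀ hlX]
    rcases le_total (N:ℝ) 1 with hN | hN
    · nlinarith [mul_nonneg hlq hx0.le, mul_le_mul_of_nonneg_right hN hlX.le]
    · have : ((N:ℝ) - 1) * log X ≤ ((N:ℝ) - 1) * (2 * log ((n:ℝ) + 1)) :=
        mul_le_mul_of_nonneg_left (by linarith) (by linarith)
      linarith
  have hsplit : ((Finset.Ioc 0 X).filter fun p => p.Prime ∧ q ∣ p - 1).card ≤
      Nat.primeCounting n + ((Finset.Ioc n X).filter fun p => p.Prime ∧ q ∣ p - 1).card := by
    have h1 : Nat.primeCounting n = ((Finset.range (n + 1)).filter Nat.Prime).card := by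
      rw [Nat.primeCounting, Nat.primeCounting', Nat.count_eq_card_filter_range]
    rw [h1]
    refine le_trans (Finset.card_le_card fun p hp => ?_) (Finset.card_union_le _ _)
    simp only [Finset.mem_filter, Finset.mem_Ioc, Finset.mem_union, Finset.mem_range] at hp ⊢
    by_cases h : p ≤ n
    · exact Or.inl ⟨by omega, hp.2.1⟩
    · exact Or.inr ⟨⟨by omega, hp.1.2⟩, hp.2⟩
  have hsplit' : (((Finset.Ioc 0 X).filter fun p => p.Prime ∧ q ∣ p - 1).card : ℝ) ≤
      Nat.primeCounting n + ((Finset.Ioc n X).filter fun p => p.Prime ∧ q ∣ p - 1).card := by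
    exact_mod_cast hsplit
  refine hsplit'.trans ((add_le_add hsmall hbig).trans ?_)
  rw [← add_div]
  gcongr
  have : 0 ≤ log 4 * log q * x :=
    mul_nonneg (mul_nonneg (Real.log_nonneg (by norm_num)) hlq) hx0.le
  nlinarith [mul_nonneg hlq hx0.le]

/-! ### Exceptional primes -/

/-- For `t = 1 / q ≤ 1 / 3` one has `1 - t ≥ exp (-3t/2)`, so `d / φ(d) ≤ 2 exp (3/4) < 5`. -/
lemma div_totient_le_five {n : ℕ} (hn : n ≠ 0)
    (h : ∑ q ∈ n.primeFactors.erase 2, 1 / (q : ℝ) ≤ 1 / 2) (d : ℕ) (hd : d ∣ n) :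
    (d : ℝ) / (Nat.totient d : ℝ) ≤ 5 := by
  have hd0 : 0 < d := Nat.pos_of_ne_zero (ne_zero_of_dvd_ne_zero hn hd)
  have hd0' : (0:ℝ) < d := by exact_mod_cast hd0
  have htot : (Nat.totient d : ℝ) = d * ∏ p ∈ d.primeFactors, (1 - (p:ℝ)⁻¹) := by
    have := Nat.totient_eq_mul_prod_factors d
    have h2 := congrArg (fun r : ℚ => (r : ℝ)) this
    push_cast at h2
    exact h2
  have hinv : ∀ p ∈ insert 2 (n.primeFactors.erase 2), 0 ≤ 1 - (p:ℝ)⁻¹ ∧ 1 - (p:ℝ)⁻¹ ≤ 1 := by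
    intro p hp
    have h1 : 1 ≤ p := by
      rcases Finset.mem_insert.1 hp with rfl | hp
      · norm_num
      · exact (Nat.prime_of_mem_primeFactors (Finset.mem_of_mem_erase hp)).one_le
    have h1' : (1:ℝ) ≤ p := by exact_mod_cast h1
    have := inv_le_one_of_one_le₀ h1'
    have : 0 ≤ (p:ℝ)⁻¹ := by positivity
    constructor <;> linarith
  have h1 : ∏ p ∈ insert 2 (n.primeFactors.erase 2), (1 - (p:ℝ)⁻¹) ≤
      ∏ p ∈ d.primeFactors, (1 - (p:ℝ)⁻¹) := by
    refine Finset.prod_le_prod_of_subset_of_le_one (fun p hp => ?_) (fun p hp => (hinv p hp).1)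
      fun p hp _ => (hinv p hp).2
    rcases eq_or_ne p 2 with rfl | h2
    · exact Finset.mem_insert_self _ _
    · exact Finset.mem_insert_of_mem (Finset.mem_erase.2 ⟨h2, Nat.primeFactors_mono hd hn hp⟩)
  rw [Finset.prod_insert (Finset.notMem_erase _ _)] at h1
  have h2 : exp (-(3 / 4)) ≤ ∏ p ∈ n.primeFactors.erase 2, (1 - (p:ℝ)⁻¹) := by
    calc exp (-(3 / 4)) ≤ exp (∑ p ∈ n.primeFactors.erase 2, -(3 / 2 * (1 / (p:ℝ)))) := by
          rw [Finset.sum_neg_distrib, ← Finset.mul_sum]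
          exact Real.exp_le_exp.2 (by linarith)
      _ = ∏ p ∈ n.primeFactors.erase 2, exp (-(3 / 2 * (1 / (p:ℝ)))) := Real.exp_sum _ _
      _ ≤ _ := by
          refine Finset.prod_le_prod (fun _ _ => (exp_pos _).le) fun p hp => ?_
          obtain ⟨hp2, hp⟩ := Finset.mem_erase.1 hp
          have hpp := Nat.prime_of_mem_primeFactors hp
          have h3 : 3 ≤ p := by
            have := hpp.two_le
            omega
          have h3' : (3:ℝ) ≤ p := by exact_mod_cast h3
          have ht : (p:ℝ)⁻¹ ≤ 3⁻¹ := inv_anti₀ (by norm_num) h3'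
          have ht0 : 0 ≤ (p:ℝ)⁻¹ := by positivity
          rw [one_div, Real.exp_neg]
          set t := (p:ℝ)⁻¹
          have h4 := Real.add_one_le_exp (3 / 2 * t)
          refine inv_le_of_inv_le₀ (by linarith) (le_trans ?_ h4)
          rw [inv_le_iff_one_le_mul₀ (by linarith)]
          nlinarith
  have h3 : (1 / 5 : ℝ) ≤ ∏ p ∈ d.primeFactors, (1 - (p:ℝ)⁻¹) := by
    have he : exp (3 / 4) ≤ 5 / 2 := by
      have h4 : exp (3 / 4) ^ 4 = exp 1 ^ 3 := by
        rw [← Real.exp_nat_mul, ← Real.exp_nat_mul]; norm_num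
      rw [← pow_le_pow_iff_left₀ (exp_pos _).le (by norm_num) (show (4:ℕ) ≠ 0 by norm_num), h4]
      calc exp 1 ^ 3 ≤ 2.7182818286 ^ 3 := by
            gcongr
            exact Real.exp_one_lt_d9.le
        _ ≤ _ := by norm_num
    have h5 : (2 / 5 : ℝ) ≤ exp (-(3 / 4)) := by
      rw [Real.exp_neg, show (2 / 5 : ℝ) = (5 / 2)⁻¹ by norm_num]
      exact inv_anti₀ (exp_pos _) he
    refine le_trans ?_ h1
    push_cast
    linarith
  rw [htot, div_le_iff₀ (by positivity)]
  nlinarith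

/-- Markov's inequality for `∑ 1 / q` over the odd primes `q ∣ p - 1`, all of which are at least `Y`. -/
lemma card_le_sum (Y : ℝ) (X : ℕ) :
    ({p : ℕ | p ≤ X ∧ p.Prime ∧ IsRough Y p ∧
      ¬ ∀ d : ℕ, d ∣ p - 1 → (d : ℝ) / (Nat.totient d : ℝ) ≤ 5}.ncard : ℝ) ≤
    2 * ∑ q ∈ (Finset.Ioc 0 X).filter (fun q : ℕ => q.Prime ∧ Y ≤ q),
      (((Finset.Ioc 0 X).filter fun p => p.Prime ∧ q ∣ p - 1).card : ℝ) / q := by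
  classical
  set P := (Finset.Ioc 0 X).filter (fun q : ℕ => q.Prime ∧ Y ≤ q) with hP
  set B := (Finset.Ioc 0 X).filter (fun p : ℕ => p.Prime ∧ IsRough Y p ∧
      ¬ ∀ d : ℕ, d ∣ p - 1 → (d : ℝ) / (Nat.totient d : ℝ) ≤ 5) with hB
  have hBs : {p : ℕ | p ≤ X ∧ p.Prime ∧ IsRough Y p ∧
      ¬ ∀ d : ℕ, d ∣ p - 1 → (d : ℝ) / (Nat.totient d : ℝ) ≤ 5} = (B : Set ℕ) := by
    ext p
    simp only [hB, Finset.coe_filter, Set.mem_ofPred_eq, Finset.mem_Ioc]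
    constructor
    · rintro ⟨h1, h2⟩
      exact ⟨⟨h2.1.pos, h1⟩, h2⟩
    · rintro ⟨h1, h2⟩
      exact ⟨h1.2, h2⟩
  rw [hBs, Set.ncard_coe_finset]
  have hone : ∀ p ∈ B, (1 / 2 : ℝ) ≤ ∑ q ∈ P, if q ∣ p - 1 then 1 / (q : ℝ) else 0 := by
    intro p hp
    obtain ⟨hpX, hpp, hr, hbad⟩ := Finset.mem_filter.1 hp
    have hp0 : p - 1 ≠ 0 := by have := hpp.two_le; omega
    by_contra! hlt
    refine hbad (div_totient_le_five hp0 (le_trans ?_ hlt.le))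
    rw [← Finset.sum_filter]
    refine Finset.sum_le_sum_of_subset_of_nonneg (fun q hq => ?_) fun _ _ _ => by positivity
    obtain ⟨hq2, hq⟩ := Finset.mem_erase.1 hq
    have hqp := Nat.prime_of_mem_primeFactors hq
    have hqd := Nat.dvd_of_mem_primeFactors hq
    have hle := Nat.le_of_dvd (Nat.pos_of_ne_zero hp0) hqd
    have := (Finset.mem_Ioc.1 hpX).2
    rw [Finset.mem_filter, Finset.mem_filter, Finset.mem_Ioc]
    exact ⟨⟨⟨hqp.pos, by omega⟩, hqp, hr q hqp hqd hq2⟩, hqd⟩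
  have h1 := Finset.sum_le_sum hone
  rw [Finset.sum_const, nsmul_eq_mul, Finset.sum_comm] at h1
  have h2 : ∑ q ∈ P, ∑ p ∈ B, (if q ∣ p - 1 then 1 / (q : ℝ) else 0) ≤ ∑ q ∈ P,
      (((Finset.Ioc 0 X).filter fun p => p.Prime ∧ q ∣ p - 1).card : ℝ) / q := by
    refine Finset.sum_le_sum fun q _ => ?_
    rw [← Finset.sum_filter, Finset.sum_const, nsmul_eq_mul, mul_one_div]
    gcongr
    intro p hp
    simp only [hB, Finset.mem_filter] at hp ⊢
    exact ⟨hp.1.1, hp.1.2.1, hp.2⟩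
  linarith

lemma card_mod_one_trivial {q X : ℕ} :
    (((Finset.Ioc 0 X).filter fun p => p.Prime ∧ q ∣ p - 1).card : ℝ) ≤ (X : ℝ) / q := by
  have h1 : ((Finset.Ioc 0 X).filter fun p => p.Prime ∧ q ∣ p - 1).card ≤ X / q := by
    rw [← Nat.Ioc_filter_dvd_card_eq_div]
    refine Finset.card_le_card_of_injOn (fun p => p - 1) (fun p hp => ?_) fun p hp r hr h => ?_
    · simp only [Finset.coe_filter, Set.mem_ofPred_eq, Finset.mem_Ioc] at hp ⊢
      have := hp.2.1.two_le
      exact ⟨⟨by omega, by omega⟩, hp.2.2⟩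
    · simp only [Finset.coe_filter, Set.mem_ofPred_eq, Finset.mem_Ioc] at hp hr
      have := hp.2.1.two_le
      have := hr.2.1.two_le
      simp only at h
      omega
  exact (by exact_mod_cast h1 : (_ : ℝ) ≤ ((X / q : ℕ) : ℝ)).trans Nat.cast_div_le

/-- The `Y`-rough primes up to `X` with some `d ∣ p - 1` such that `d / φ(d) > 5` number
`O(Y ^ (-17/20) X / log X)`, with an absolute implied constant; `X₀` depends on `Y`. -/
lemma bad_upper : ∃ C : ℝ, 0 < C ∧ ∀ Y : ℕ, 1 ≤ Y → ∃ X₀ : ℕ, ∀ X ≥ X₀,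
    ({p : ℕ | p ≤ X ∧ p.Prime ∧ IsRough Y p ∧
      ¬ ∀ d : ℕ, d ∣ p - 1 → (d : ℝ) / (Nat.totient d : ℝ) ≤ 5}.ncard : ℝ) ≤
    C * (Y : ℝ) ^ (-(17 / 20) : ℝ) * X / log X := by
  set Z₁ : ℝ := ∑' n : ℕ, (n : ℝ) ^ (-(11 / 10) : ℝ) with hZ₁
  have hs₁ : Summable fun n : ℕ => (n : ℝ) ^ (-(11 / 10) : ℝ) :=
    Real.summable_nat_rpow.2 (by norm_num)
  set Z₂ : ℝ := ∑' n : ℕ, (n : ℝ) ^ (-(3 / 2) : ℝ) with hZ₂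
  have hs₂ : Summable fun n : ℕ => (n : ℝ) ^ (-(3 / 2) : ℝ) :=
    Real.summable_nat_rpow.2 (by norm_num)
  have hZ₁0 : 0 ≤ Z₁ := tsum_nonneg fun n => by positivity
  have hZ₂0 : 0 ≤ Z₂ := tsum_nonneg fun n => by positivity
  set D : ℝ := 6 + 4 * log 4 with hD
  have hD0 : 0 < D := by
    have : 0 ≤ log 4 := Real.log_nonneg (by norm_num)
    positivity
  refine ⟨2 * (21 * D * Z₁ + 1), by positivity, fun Y hY => ?_⟩
  have hY0 : (0:ℝ) < Y := by exact_mod_cast hY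
  set ε : ℝ := (Y : ℝ) ^ (-(17 / 20) : ℝ) with hε
  have hε0 : 0 < ε := by positivity
  have hev : ∀ᶠ X : ℕ in atTop, Z₂ * (X:ℝ) ^ (3 / 4 : ℝ) * log X ≤ ε * X := by
    have h1 := (isLittleO_log_rpow_atTop (show (0:ℝ) < 1 / 4 by norm_num)).comp_tendsto
      tendsto_natCast_atTop_atTop
    filter_upwards [h1.bound (show (0:ℝ) < ε / (Z₂ + 1) by positivity), eventually_ge_atTop 1]
      with X hX hX1
    have hX0 : (0:ℝ) < X := by exact_mod_cast hX1
    simp only [Function.comp, norm_eq_abs] at hX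
    rw [abs_of_nonneg (by positivity : (0:ℝ) ≤ (X:ℝ) ^ (1 / 4 : ℝ))] at hX
    calc Z₂ * (X:ℝ) ^ (3 / 4 : ℝ) * log X
        ≤ (Z₂ + 1) * (X:ℝ) ^ (3 / 4 : ℝ) * (ε / (Z₂ + 1) * (X:ℝ) ^ (1 / 4 : ℝ)) := by
          have hl : 0 ≤ log (X:ℝ) := Real.log_nonneg (by exact_mod_cast hX1)
          refine mul_le_mul ?_ ((le_abs_self _).trans hX) hl (by positivity)
          gcongr
          linarith
      _ = ε * ((X:ℝ) ^ (3 / 4 : ℝ) * (X:ℝ) ^ (1 / 4 : ℝ)) := by field_simp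
      _ = ε * X := by rw [← Real.rpow_add hX0]; norm_num
  obtain ⟨X₁, hX₁⟩ := eventually_atTop.1 hev
  refine ⟨max X₁ 2, fun X hX => ?_⟩
  have hX1 : X₁ ≤ X := (le_max_left _ _).trans hX
  have hX2 : 2 ≤ X := (le_max_right _ _).trans hX
  have hX2' : (2:ℝ) ≤ X := by exact_mod_cast hX2
  have hX0 : (0:ℝ) < X := by linarith
  have hlX : 0 < log (X:ℝ) := Real.log_pos (by linarith)
  refine (card_le_sum Y X).trans ?_
  set P := (Finset.Ioc 0 X).filter (fun q : ℕ => q.Prime ∧ (Y:ℝ) ≤ q) with hP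
  have hterm : ∀ q ∈ P, (((Finset.Ioc 0 X).filter fun p => p.Prime ∧ q ∣ p - 1).card : ℝ) / q ≤
      21 * D * ε * (X / log X) * (q : ℝ) ^ (-(11 / 10) : ℝ) +
        (X : ℝ) ^ (3 / 4 : ℝ) * (q : ℝ) ^ (-(3 / 2) : ℝ) := by
    intro q hq
    obtain ⟨-, hqp, hYq⟩ := Finset.mem_filter.1 hq
    have hq0 : (0:ℝ) < q := by exact_mod_cast hqp.pos
    have hq1 : (1:ℝ) ≤ q := by exact_mod_cast hqp.one_le
    -- The first summand bounds the case `q ^ 2 ≤ X`, the second the case `q ^ 2 > X`.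
    by_cases hqX : q * q ≤ X
    · refine le_add_of_le_of_nonneg ?_ (by positivity)
      have h1 := card_primes_mod_one_le hqp hqX
      rw [← hD] at h1
      -- Of `q ^ (-2 + 1/20)`, the factor `q ^ (-17/20)` is bounded by its value at `Y`, and what
      -- remains, `q ^ (-11/10)`, is summable.
      have h2 : 1 + log (q:ℝ) ≤ 21 * (q:ℝ) ^ (1 / 20 : ℝ) := by
        have h3 := Real.log_le_rpow_div hq0.le (show (0:ℝ) < 1 / 20 by norm_num)
        have h4 := Real.one_le_rpow hq1 (show (0:ℝ) ≤ 1 / 20 by norm_num)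
        linarith
      have h5 : (q:ℝ) ^ (-(17 / 20) : ℝ) ≤ ε :=
        Real.rpow_le_rpow_of_nonpos hY0 hYq (by norm_num)
      have h6 : (q:ℝ) ^ (1 / 20 : ℝ) / q / q =
          (q:ℝ) ^ (-(17 / 20) : ℝ) * (q:ℝ) ^ (-(11 / 10) : ℝ) := by
        rw [div_div, ← Real.rpow_add hq0]
        have : (q:ℝ) * q = (q:ℝ) ^ (2:ℝ) := by rw [Real.rpow_two, sq]
        rw [this, ← Real.rpow_sub hq0]
        norm_num
      calc _ ≤ D * ((X : ℝ) / q) * (1 + log q) / log X / q := by gcongr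
        _ ≤ D * ((X : ℝ) / q) * (21 * (q:ℝ) ^ (1 / 20 : ℝ)) / log X / q := by gcongr
        _ = 21 * D * (X / log X) * ((q:ℝ) ^ (1 / 20 : ℝ) / q / q) := by ring
        _ = 21 * D * (q:ℝ) ^ (-(17 / 20) : ℝ) * (X / log X) * (q:ℝ) ^ (-(11 / 10) : ℝ) := by
            rw [h6]; ring
        _ ≤ _ := by gcongr
    · refine le_add_of_nonneg_of_le (by positivity) ?_
      have h1 : (X:ℝ) ≤ (q:ℝ) ^ (2:ℝ) := by
        rw [Real.rpow_two, sq]; exact_mod_cast (not_le.1 hqX).le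
      have h2 : (X:ℝ) ^ (1 / 4 : ℝ) ≤ (q:ℝ) ^ (1 / 2 : ℝ) := by
        refine (Real.rpow_le_rpow hX0.le h1 (by norm_num)).trans (le_of_eq ?_)
        rw [← Real.rpow_mul hq0.le]; norm_num
      calc _ ≤ (X : ℝ) / q / q := by
            gcongr
            exact card_mod_one_trivial
        _ = (X:ℝ) ^ (3 / 4 : ℝ) * (X:ℝ) ^ (1 / 4 : ℝ) * (q:ℝ) ^ (-2 : ℝ) := by
            rw [← Real.rpow_add hX0, Real.rpow_neg hq0.le, Real.rpow_two]
            norm_num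
            field_simp
        _ ≤ (X:ℝ) ^ (3 / 4 : ℝ) * (q:ℝ) ^ (1 / 2 : ℝ) * (q:ℝ) ^ (-2 : ℝ) := by gcongr
        _ = _ := by rw [mul_assoc, ← Real.rpow_add hq0]; norm_num
  have hsum := Finset.sum_le_sum hterm
  rw [Finset.sum_add_distrib, ← Finset.mul_sum, ← Finset.mul_sum] at hsum
  have hb₁ : ∑ q ∈ P, (q : ℝ) ^ (-(11 / 10) : ℝ) ≤ Z₁ :=
    hs₁.sum_le_tsum _ fun _ _ => by positivity
  have hb₂ : ∑ q ∈ P, (q : ℝ) ^ (-(3 / 2) : ℝ) ≤ Z₂ :=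
    hs₂.sum_le_tsum _ fun _ _ => by positivity
  have hfin : (X : ℝ) ^ (3 / 4 : ℝ) * Z₂ ≤ ε * X / log X := by
    rw [le_div_iff₀ hlX]
    linarith [hX₁ X hX1]
  calc _ ≤ 2 * (21 * D * ε * (X / log X) * Z₁ + (X : ℝ) ^ (3 / 4 : ℝ) * Z₂) := by
        refine mul_le_mul_of_nonneg_left (hsum.trans ?_) (by norm_num)
        gcongr
    _ ≤ 2 * (21 * D * ε * (X / log X) * Z₁ + ε * X / log X) := by gcongr
    _ = _ := by ring

end

/-! ### Comparison of the two counts -/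

theorem stmt15 (δ : ℝ) (hδ : 0 < δ) :
    ∃ y : ℝ, 0 < y ∧ ∃ x₀ : ℕ, ∀ x : ℕ, x₀ ≤ x →
      (1 - δ) * ({p : ℕ | p ≤ x ∧ p.Prime ∧ IsRough y p}.ncard : ℝ) ≤
        ({p : ℕ | p ≤ x ∧ p.Prime ∧ IsRough y p ∧
            ∀ d : ℕ, d ∣ p - 1 →
              (d : ℝ) / (Nat.totient d : ℝ) ≤ 5}.ncard : ℝ) := by
  obtain ⟨c, hc, hlow⟩ := rough_lower
  obtain ⟨c₁, hc₁, hkap⟩ := kap_sq_lower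
  obtain ⟨C, hC, hup⟩ := bad_upper
  -- Since `17/20 = 4/5 + 1/20`, it is enough that `C k ^ (-1/20) ≤ δ c c₁`.
  obtain ⟨k, hk, hk5⟩ : ∃ k : ℕ, (k : ℝ) ^ (-(1 / 20) : ℝ) ≤ δ * c * c₁ / C ∧ 5 ≤ k := by
    have h1 := (tendsto_rpow_neg_atTop (show (0:ℝ) < 1 / 20 by norm_num)).comp
      (tendsto_natCast_atTop_atTop (R := ℝ))
    exact ((h1.eventually (ge_mem_nhds (show (0:ℝ) < δ * c * c₁ / C by positivity))).and
      (Filter.eventually_ge_atTop 5)).exists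
  have hk0 : (0:ℝ) < k := by exact_mod_cast (by omega : 0 < k)
  have hcmp : C * ((6 * k : ℕ) : ℝ) ^ (-(17 / 20) : ℝ) ≤ δ * (c * kap (6 * k) ^ 2) := by
    have h1 : ((6 * k : ℕ) : ℝ) ^ (-(17 / 20) : ℝ) ≤ (k : ℝ) ^ (-(17 / 20) : ℝ) :=
      Real.rpow_le_rpow_of_nonpos hk0 (by push_cast; linarith) (by norm_num)
    have h2 : (k : ℝ) ^ (-(17 / 20) : ℝ) =
        (k : ℝ) ^ (-(1 / 20) : ℝ) * (k : ℝ) ^ (-(4 / 5) : ℝ) := by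
      rw [← Real.rpow_add hk0]; norm_num
    calc _ ≤ C * ((k : ℝ) ^ (-(1 / 20) : ℝ) * (k : ℝ) ^ (-(4 / 5) : ℝ)) := by
          rw [← h2]; gcongr
      _ ≤ C * (δ * c * c₁ / C * (k : ℝ) ^ (-(4 / 5) : ℝ)) := by gcongr
      _ = δ * (c * (c₁ * (k : ℝ) ^ (-(4 / 5) : ℝ))) := by field_simp
      _ ≤ _ := by gcongr; exact hkap k hk5
  obtain ⟨X₁, hX₁⟩ := hlow (6 * k)
  obtain ⟨X₂, hX₂⟩ := hup (6 * k) (by omega)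
  refine ⟨((6 * k : ℕ) : ℝ), by push_cast; linarith, max (max X₁ X₂) 2, fun x hx => ?_⟩
  have h1 := hX₁ x (le_trans (by simp) hx)
  have h2 := hX₂ x (le_trans (by simp) hx)
  have hx2 : 2 ≤ x := le_trans (by simp) hx
  have hx2' : (2:ℝ) ≤ x := by exact_mod_cast hx2
  have hlog : 0 < Real.log x := Real.log_pos (by linarith)
  have h3 : C * ((6 * k : ℕ) : ℝ) ^ (-(17 / 20) : ℝ) * x / Real.log x ≤
      δ * (c * kap (6 * k) ^ 2 * x / Real.log x) := by
    calc _ ≤ δ * (c * kap (6 * k) ^ 2) * x / Real.log x := by gcongr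
      _ = _ := by ring
  have h4 := mul_le_mul_of_nonneg_left h1 hδ.le
  set R := {p : ℕ | p ≤ x ∧ p.Prime ∧ IsRough ((6 * k : ℕ) : ℝ) p} with hR
  set G := {p : ℕ | p ≤ x ∧ p.Prime ∧ IsRough ((6 * k : ℕ) : ℝ) p ∧
    ∀ d : ℕ, d ∣ p - 1 → (d : ℝ) / (Nat.totient d : ℝ) ≤ 5} with hG
  set B := {p : ℕ | p ≤ x ∧ p.Prime ∧ IsRough ((6 * k : ℕ) : ℝ) p ∧
    ¬ ∀ d : ℕ, d ∣ p - 1 → (d : ℝ) / (Nat.totient d : ℝ) ≤ 5} with hB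
  have h5 : R.ncard ≤ G.ncard + B.ncard := by
    refine le_trans (Set.ncard_le_ncard (fun p hp => ?_) ?_) (Set.ncard_union_le G B)
    · by_cases h : ∀ d : ℕ, d ∣ p - 1 → (d : ℝ) / (Nat.totient d : ℝ) ≤ 5
      · exact Or.inl ⟨hp.1, hp.2.1, hp.2.2, h⟩
      · exact Or.inr ⟨hp.1, hp.2.1, hp.2.2, h⟩
    · refine (Set.finite_Iic x).subset fun p hp => ?_
      rcases hp with hp | hp <;> exact hp.1
  have h6 : (R.ncard : ℝ) ≤ G.ncard + B.ncard := by exact_mod_cast h5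
  linarith
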